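/- arXiv:1308.1069 — 3 statements merged into one kernel-verified Lean document; each statement's English description precedes it below -/
import Mathlib

section
/- There exists a universal constant C > 0 (independent of the graph, the group, p, α and f) such that the following holds. Suppose V is infinite, and let w : V → [1,∞) be a function such that |{m ∈ V : w(m) ≤ r}| ≤ Γ(r) for every real r ≥ 1. Then for every finitely supported f : V → ℝ, every real p with 1 ≤ p < ∞, and every α > 0, one has ‖f‖_{ℓ^p(V)} ≤ C · p^{α/(α+1)} · ‖∇f‖_{ℓ^p(V)}^{α/(α+1)} · ‖w^α f‖_{ℓ^p(V)}^{1/(α+1)}. -/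
/-!
The proof combines an `ℓ¹` isoperimetric-type inequality with an optimization over scales.

Every pair `(x, y)` of vertices has an orbit under the automorphism group; by transitivity it is a
directed graph with constant out-degree and constant in-degree. There are two cases.

* Every orbit of edges has equal in- and out-degree (the unimodular case). Summing the
  triangle inequality over orbits of triples (`orbSum_triangle`) and inducting on the distance
  gives a pseudo-Poincaré inequality on each orbit of pairs (`orbSum_le`): the average
  of `|g a - g b|` over a pair orbit at distance `k` costs `k ‖∇g‖₁`. Averaging over a ball with at
  least twice as many points as the set `{w ≤ r}`, which exists at radius at most `3 ⌈r⌉` because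
  the graph is infinite (`two_mul_ball_le`), shows that `{w ≤ r}` carries at most half
  the mass of `g`, up to `3 ⌈r⌉ ‖∇g‖₁` (`two_mul_sum_le`).
* Some orbit of edges has different in- and out-degrees. These are integers, so double counting
  yields `‖g‖₁ ≤ ‖∇g‖₁` outright (`tsum_le_edgeSum`), with no loss in the constant.

Either way `‖g‖₁ ≤ 6 ⌈r⌉ ‖∇g‖₁ + 2 ∑_{w > r} g` for all `r ≥ 1` (`tsum_le_of_weight`). For
`g = |f| ^ p`, the chain rule and Hölder's inequality bound `‖∇g‖₁` by
`2 p ‖f‖_p ^ (p - 1) ‖∇f‖_p`, and on `{w > r}` one has `g ≤ r ^ (-α p) (w ^ α |f|) ^ p`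
(`additive_ineq`). Choosing `r = (4 ‖w ^ α f‖_p / ‖f‖_p) ^ (1 / α)`, which is at least `1` because
`w ≥ 1`, gives the claim with `C = 192` (`optimize`).
-/


open scoped BigOperators

/-- The (modulus of the) graph gradient: `|∇f|(m) = ∑_{n ∼ m} |f(m) - f(n)|`. -/
noncomputable def gradAbs {V : Type} (G : SimpleGraph V) (f : V → ℝ) (m : V) : ℝ :=
  ∑ᶠ n ∈ G.neighborSet m, |f m - f n|

/-- The `ℓ^p` norm of a function on the vertex set. -/
noncomputable def lpN {V : Type} (p : ℝ) (f : V → ℝ) : ℝ :=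
  (∑ᶠ m, |f m| ^ p) ^ (1 / p)

open scoped ENNReal

namespace TransitiveUncertainty

/-! ### Indicators and counting in `ℝ≥0∞` -/

open Classical in
/-- The indicator of a proposition, with values in `ℝ≥0∞`, so that all sums over vertices
make sense without summability hypotheses. -/
noncomputable def ind (P : Prop) : ℝ≥0∞ := if P then 1 else 0

lemma ind_true {P : Prop} (h : P) : ind P = 1 := by simp [ind, h]

lemma ind_false {P : Prop} (h : ¬ P) : ind P = 0 := by simp [ind, h]

lemma ind_le_ind {P Q : Prop} (h : P → Q) : ind P ≤ ind Q := by
  by_cases hP : P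
  · rw [ind_true hP, ind_true (h hP)]
  · rw [ind_false hP]; exact zero_le

lemma ind_congr {P Q : Prop} (h : P ↔ Q) : ind P = ind Q := by rw [propext h]

lemma tsum_ind {V : Type} {s : Set V} (hs : s.Finite) :
    ∑' b, ind (b ∈ s) = (s.ncard : ℝ≥0∞) := by
  rw [tsum_eq_sum (s := hs.toFinset) (fun b hb => ind_false (by simpa using hb)),
    Finset.sum_congr rfl (fun b hb => ind_true (by simpa using hb)), Set.ncard_eq_toFinset_card s hs]
  simp

/-! ### Distances and balls -/

section Graph

variable {V : Type} {G : SimpleGraph V}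

lemma dist_le_iso (hc : G.Connected) (φ : G ≃g G) (x y : V) :
    G.dist (φ x) (φ y) ≤ G.dist x y := by
  obtain ⟨p, hp⟩ := hc.exists_walk_length_eq_dist x y
  rw [← hp, ← SimpleGraph.Walk.length_map φ.toHom p]
  exact SimpleGraph.dist_le _

lemma dist_iso (hc : G.Connected) (φ : G ≃g G) (x y : V) :
    G.dist (φ x) (φ y) = G.dist x y := by
  refine le_antisymm (dist_le_iso hc φ x y) ?_
  simpa using dist_le_iso hc φ.symm (φ x) (φ y)

lemma exists_adj_dist (hc : G.Connected) {x z : V} {k : ℕ} (h : G.dist x z = k + 1) :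
    ∃ y, G.Adj x y ∧ G.dist y z = k := by
  obtain ⟨p, hp⟩ := hc.exists_walk_length_eq_dist x z
  cases p with
  | nil => simp at h
  | @cons _ y _ hxy q =>
    refine ⟨y, hxy, ?_⟩
    have h1 := SimpleGraph.dist_le q
    have h2 := hc.dist_triangle (u := x) (v := y) (w := z)
    have h3 : G.dist x y = 1 := SimpleGraph.dist_eq_one_iff_adj.2 hxy
    simp only [SimpleGraph.Walk.length_cons] at hp
    omega

lemma finite_ball (hc : G.Connected) (hf : ∀ v : V, (G.neighborSet v).Finite) (n : ℕ) (o : V) :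
    {v | G.dist v o < n}.Finite := by
  induction n with
  | zero => simp
  | succ n ih =>
    refine ((ih.biUnion (fun u _ => hf u)).union (Set.finite_singleton o)).subset ?_
    intro v hv
    simp only [Set.mem_ofPred_eq] at hv
    rcases h : G.dist v o with _ | k
    · right; exact (hc.dist_eq_zero_iff).1 h
    · left
      obtain ⟨y, hy, hyk⟩ := exists_adj_dist hc h
      simp only [Set.mem_iUnion, Set.mem_ofPred_eq]
      exact ⟨y, by omega, hy.symm⟩

lemma finite_ball' (hc : G.Connected) (hf : ∀ v : V, (G.neighborSet v).Finite) (n : ℕ) (o : V) :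
    {v | G.dist o v < n}.Finite := by
  simpa only [SimpleGraph.dist_comm] using finite_ball hc hf n o

lemma exists_dist_eq (hc : G.Connected) (hf : ∀ v : V, (G.neighborSet v).Finite) [Infinite V]
    (o : V) (n : ℕ) : ∃ y, G.dist y o = n := by
  have key : ∀ k, ∀ v, G.dist v o = n + k → ∃ y, G.dist y o = n := by
    intro k
    induction k with
    | zero => exact fun v hv => ⟨v, hv⟩
    | succ k ih =>
      intro v hv
      obtain ⟨y, -, hy⟩ := exists_adj_dist hc (k := n + k) hv
      exact ih y hy
  obtain ⟨v, hv⟩ := (finite_ball hc hf n o).exists_notMem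
  simp only [Set.mem_ofPred_eq, not_lt] at hv
  exact key (G.dist v o - n) v (by omega)

lemma ncard_ball_eq (hc : G.Connected) (ht : ∀ u v : V, ∃ φ : G ≃g G, φ u = v) (n : ℕ) (u v : V) :
    {x | G.dist u x < n}.ncard = {x | G.dist v x < n}.ncard := by
  obtain ⟨φ, rfl⟩ := ht u v
  rw [← Set.ncard_image_of_injective {x | G.dist u x < n} φ.injective]
  congr 1
  ext x
  simp only [Set.mem_image, Set.mem_ofPred_eq]
  constructor
  · rintro ⟨y, hy, rfl⟩
    rwa [dist_iso hc]
  · intro hx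
    refine ⟨φ.symm x, ?_, by simp⟩
    rw [← dist_iso hc φ]
    simpa using hx

/-- Tripling the radius at least doubles the volume: two balls of radius `n` whose centres are
`2 n` apart are disjoint, and both lie in the ball of radius `3 n` about one of the centres. -/
lemma two_mul_ball_le (hc : G.Connected) (hf : ∀ v : V, (G.neighborSet v).Finite) [Infinite V]
    (ht : ∀ u v : V, ∃ φ : G ≃g G, φ u = v) (n : ℕ) (o : V) :
    2 * {x | G.dist o x < n}.ncard ≤ {x | G.dist o x < 3 * n}.ncard := by
  obtain ⟨y, hy⟩ := exists_dist_eq hc hf o (2 * n)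
  rw [SimpleGraph.dist_comm] at hy
  have hd : Disjoint {x | G.dist o x < n} {x | G.dist y x < n} := by
    rw [Set.disjoint_left]
    intro x hx hx'
    simp only [Set.mem_ofPred_eq] at hx hx'
    have h2 := hc.dist_triangle (u := o) (v := x) (w := y)
    rw [SimpleGraph.dist_comm (u := x)] at h2
    omega
  calc 2 * {x | G.dist o x < n}.ncard
      = {x | G.dist o x < n}.ncard + {x | G.dist y x < n}.ncard := by
        rw [ncard_ball_eq hc ht n y o]; ring
    _ = ({x | G.dist o x < n} ∪ {x | G.dist y x < n}).ncard :=
        (Set.ncard_union_eq hd (finite_ball' hc hf n o) (finite_ball' hc hf n y)).symm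
    _ ≤ _ := by
        refine Set.ncard_le_ncard ?_ (finite_ball' hc hf (3 * n) o)
        rintro x (hx | hx) <;> simp only [Set.mem_ofPred_eq] at hx ⊢
        · omega
        · have h2 := hc.dist_triangle (u := o) (v := y) (w := x)
          omega

/-! ### Orbits of pairs and triples -/

/-- Indicator of the orbit of the pair `(x, y)` under the automorphism group, evaluated at
`(a, b)`. -/
noncomputable def orb (G : SimpleGraph V) (x y a b : V) : ℝ≥0∞ :=
  ind (∃ φ : G ≃g G, φ x = a ∧ φ y = b)

/-- Indicator of the orbit of the triple `(x, y, z)` under the automorphism group, evaluated at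
`(a, b, c)`. -/
noncomputable def trip (G : SimpleGraph V) (x y z a b c : V) : ℝ≥0∞ :=
  ind (∃ φ : G ≃g G, φ x = a ∧ φ y = b ∧ φ z = c)

/-- The number of vertices `b` such that `(x, b)` lies in the orbit of `(x, y)`, that is, the size
of the orbit of `y` under the stabilizer of `x`. -/
noncomputable def outDeg (G : SimpleGraph V) (x y : V) : ℝ≥0∞ := ∑' b, orb G x y x b

/-- The number of vertices `a` such that `(a, y)` lies in the orbit of `(x, y)`, that is, the size
of the orbit of `x` under the stabilizer of `y`. -/
noncomputable def inDeg (G : SimpleGraph V) (x y : V) : ℝ≥0∞ := ∑' a, orb G x y a y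

/-- The total of `h` over all pairs in the orbit of `(x, y)`. -/
noncomputable def orbSum (G : SimpleGraph V) (h : V → V → ℝ≥0∞) (x y : V) : ℝ≥0∞ :=
  ∑' a, ∑' b, orb G x y a b * h a b

/-- The total of `h` over all ordered pairs of neighbours. -/
noncomputable def edgeSum (G : SimpleGraph V) (h : V → V → ℝ≥0∞) : ℝ≥0∞ :=
  ∑' a, ∑' b, ind (G.Adj a b) * h a b

lemma orb_iso (φ : G ≃g G) (x y a b : V) : orb G x y (φ a) (φ b) = orb G x y a b := by
  apply ind_congr
  constructor
  · rintro ⟨ψ, h1, h2⟩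
    exact ⟨ψ.trans φ.symm, by simp [h1], by simp [h2]⟩
  · rintro ⟨ψ, h1, h2⟩
    exact ⟨ψ.trans φ, by simp [h1], by simp [h2]⟩

lemma trip_iso (φ : G ≃g G) (x y z a b c : V) :
    trip G x y z (φ a) (φ b) (φ c) = trip G x y z a b c := by
  apply ind_congr
  constructor
  · rintro ⟨ψ, h1, h2, h3⟩
    exact ⟨ψ.trans φ.symm, by simp [h1], by simp [h2], by simp [h3]⟩
  · rintro ⟨ψ, h1, h2, h3⟩
    exact ⟨ψ.trans φ, by simp [h1], by simp [h2], by simp [h3]⟩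

lemma orb_self (x y : V) : orb G x y x y = 1 := ind_true ⟨RelIso.refl _, rfl, rfl⟩

lemma orb_symm (x y a b : V) : orb G x y a b = orb G a b x y := by
  apply ind_congr
  constructor <;>
  · rintro ⟨ψ, rfl, rfl⟩
    exact ⟨ψ.symm, by simp, by simp⟩

lemma tsum_iso (φ : G ≃g G) (F : V → ℝ≥0∞) : ∑' a, F (φ a) = ∑' a, F a :=
  φ.toEquiv.tsum_eq F

lemma tsum_orb_out (ht : ∀ u v : V, ∃ φ : G ≃g G, φ u = v) (x y a : V) :
    ∑' b, orb G x y a b = outDeg G x y := by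
  obtain ⟨φ, rfl⟩ := ht x a
  rw [outDeg, ← tsum_iso φ]
  simp only [orb_iso]

lemma tsum_orb_in (ht : ∀ u v : V, ∃ φ : G ≃g G, φ u = v) (x y b : V) :
    ∑' a, orb G x y a b = inDeg G x y := by
  obtain ⟨φ, rfl⟩ := ht y b
  rw [inDeg, ← tsum_iso φ]
  simp only [orb_iso]

lemma outDeg_ne_zero (x y : V) : outDeg G x y ≠ 0 := by
  have := ENNReal.le_tsum (f := fun b => orb G x y x b) y
  simp only [orb_self] at this
  exact (lt_of_lt_of_le one_pos this).ne'

lemma outDeg_nat (hc : G.Connected) (hf : ∀ v : V, (G.neighborSet v).Finite) (x y : V) :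
    ∃ n : ℕ, outDeg G x y = n := by
  have hs : {b | ∃ φ : G ≃g G, φ x = x ∧ φ y = b}.Finite := by
    refine (finite_ball' hc hf (G.dist x y + 1) x).subset ?_
    rintro b ⟨φ, h1, rfl⟩
    have := dist_iso hc φ x y
    rw [h1] at this
    simp only [Set.mem_ofPred_eq]; omega
  exact ⟨_, tsum_ind hs⟩

lemma inDeg_nat (hc : G.Connected) (hf : ∀ v : V, (G.neighborSet v).Finite) (x y : V) :
    ∃ n : ℕ, inDeg G x y = n := by
  have hs : {a | ∃ φ : G ≃g G, φ x = a ∧ φ y = y}.Finite := by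
    refine (finite_ball hc hf (G.dist x y + 1) y).subset ?_
    rintro b ⟨φ, rfl, h1⟩
    have := dist_iso hc φ x y
    rw [h1] at this
    simp only [Set.mem_ofPred_eq]; omega
  exact ⟨_, tsum_ind hs⟩

lemma outDeg_ne_top (hc : G.Connected) (hf : ∀ v : V, (G.neighborSet v).Finite) (x y : V) :
    outDeg G x y ≠ ∞ := by
  obtain ⟨n, hn⟩ := outDeg_nat hc hf x y
  simp [hn]

/-- If `h` satisfies the triangle inequality, and the orbit of the pair `(x, y)` has equal in- and
out-degree, then the normalized totals `orbSum / outDeg` are subadditive along `x, y, z`. This is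
seen by summing the triangle inequality over the orbit of the triple `(x, y, z)`: each of the
three pair orbits is covered with constant multiplicity `m`, and the condition on the
degrees makes the number of triples with first vertex `x` equal to the number of triples with
second vertex `y`. Multiplied out, the bounds `s` and `t` for the two pieces add up. -/
lemma orbSum_triangle (hc : G.Connected) (hf : ∀ v : V, (G.neighborSet v).Finite)
    {h : V → V → ℝ≥0∞}
    (htri : ∀ a b c, h a c ≤ h a b + h b c) {x y z : V} (hxy : inDeg G x y = outDeg G x y)
    {s t : ℝ≥0∞} (hs : orbSum G h x y ≤ s * outDeg G x y)
    (ht' : orbSum G h y z ≤ t * outDeg G y z) :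
    orbSum G h x z ≤ (s + t) * outDeg G x z := by
  set m₁ : ℝ≥0∞ := ∑' c, trip G x y z x y c with hm₁
  set m₂ : ℝ≥0∞ := ∑' a, trip G x y z a y z with hm₂
  set m₃ : ℝ≥0∞ := ∑' b, trip G x y z x b z with hm₃
  have e₁ : ∀ a b, ∑' c, trip G x y z a b c = m₁ * orb G x y a b := by
    intro a b
    by_cases hab : ∃ φ : G ≃g G, φ x = a ∧ φ y = b
    · obtain ⟨φ, rfl, rfl⟩ := hab
      rw [orb_iso, orb_self, mul_one, hm₁, ← tsum_iso φ]
      simp only [trip_iso]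
    · rw [orb, ind_false hab, mul_zero]
      exact ENNReal.tsum_eq_zero.2 fun c => ind_false fun ⟨φ, h1, h2, _⟩ => hab ⟨φ, h1, h2⟩
  have e₂ : ∀ b c, ∑' a, trip G x y z a b c = m₂ * orb G y z b c := by
    intro b c
    by_cases hab : ∃ φ : G ≃g G, φ y = b ∧ φ z = c
    · obtain ⟨φ, rfl, rfl⟩ := hab
      rw [orb_iso, orb_self, mul_one, hm₂, ← tsum_iso φ]
      simp only [trip_iso]
    · rw [orb, ind_false hab, mul_zero]
      exact ENNReal.tsum_eq_zero.2 fun c => ind_false fun ⟨φ, _, h1, h2⟩ => hab ⟨φ, h1, h2⟩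
  have e₃ : ∀ a c, ∑' b, trip G x y z a b c = m₃ * orb G x z a c := by
    intro a c
    by_cases hab : ∃ φ : G ≃g G, φ x = a ∧ φ z = c
    · obtain ⟨φ, rfl, rfl⟩ := hab
      rw [orb_iso, orb_self, mul_one, hm₃, ← tsum_iso φ]
      simp only [trip_iso]
    · rw [orb, ind_false hab, mul_zero]
      exact ENNReal.tsum_eq_zero.2 fun c => ind_false fun ⟨φ, h1, _, h2⟩ => hab ⟨φ, h1, h2⟩
  have hm₃0 : m₃ ≠ 0 := by
    have := ENNReal.le_tsum (f := fun b => trip G x y z x b z) y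
    have h1 : trip G x y z x y z = 1 := ind_true ⟨RelIso.refl _, rfl, rfl, rfl⟩
    simp only [h1] at this
    exact (lt_of_lt_of_le one_pos this).ne'
  have hm₃t : m₃ ≠ ∞ := by
    refine ne_top_of_le_ne_top (outDeg_ne_top hc hf x y) (ENNReal.tsum_le_tsum fun b => ?_)
    exact ind_le_ind fun ⟨φ, h1, h2, _⟩ => ⟨φ, h1, h2⟩
  -- The number of triples with first vertex `x`, computed through `(x, y)` and through `(x, z)`.
  have n₁ : m₁ * outDeg G x y = m₃ * outDeg G x z := by
    simp only [outDeg, ← ENNReal.tsum_mul_left, ← e₁, ← e₃]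
    exact ENNReal.tsum_comm
  -- The number of triples with second vertex `y`, through `(x, y)` and through `(y, z)`.
  have n₂ : m₁ * inDeg G x y = m₂ * outDeg G y z := by
    simp only [outDeg, inDeg, ← ENNReal.tsum_mul_left, ← e₁, ← e₂]
    exact ENNReal.tsum_comm
  have s₁ : ∑' a, ∑' b, ∑' c, trip G x y z a b c * h a b = m₁ * orbSum G h x y := by
    simp only [orbSum, ← ENNReal.tsum_mul_left, ← mul_assoc, ← e₁, ENNReal.tsum_mul_right]
  have s₂ : ∑' a, ∑' b, ∑' c, trip G x y z a b c * h b c = m₂ * orbSum G h y z := by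
    simp only [orbSum, ← ENNReal.tsum_mul_left, ← mul_assoc, ← e₂, ← ENNReal.tsum_mul_right]
    rw [ENNReal.tsum_comm]
    refine tsum_congr fun b => ENNReal.tsum_comm
  have s₃ : ∑' a, ∑' b, ∑' c, trip G x y z a b c * h a c = m₃ * orbSum G h x z := by
    simp only [orbSum, ← ENNReal.tsum_mul_left, ← mul_assoc, ← e₃, ← ENNReal.tsum_mul_right]
    refine tsum_congr fun a => ENNReal.tsum_comm
  rw [← ENNReal.mul_le_mul_iff_right hm₃0 hm₃t, ← s₃]
  calc ∑' a, ∑' b, ∑' c, trip G x y z a b c * h a c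
      ≤ ∑' a, ∑' b, ∑' c, (trip G x y z a b c * h a b + trip G x y z a b c * h b c) := by
        refine ENNReal.tsum_le_tsum fun a => ENNReal.tsum_le_tsum fun b =>
          ENNReal.tsum_le_tsum fun c => ?_
        rw [← mul_add]
        gcongr
        exact htri a b c
    _ = m₁ * orbSum G h x y + m₂ * orbSum G h y z := by
        simp only [ENNReal.tsum_add, s₁, s₂]
    _ ≤ m₁ * (s * outDeg G x y) + m₂ * (t * outDeg G y z) := by gcongr
    _ = s * (m₁ * outDeg G x y) + t * (m₂ * outDeg G y z) := by ring
    _ = m₃ * ((s + t) * outDeg G x z) := by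
        rw [← n₂, hxy, n₁]; ring

lemma orbSum_adj_le (h : V → V → ℝ≥0∞) {x y : V} (hxy : G.Adj x y) :
    orbSum G h x y ≤ edgeSum G h := by
  refine ENNReal.tsum_le_tsum fun a => ENNReal.tsum_le_tsum fun b => ?_
  gcongr
  refine ind_le_ind ?_
  rintro ⟨φ, rfl, rfl⟩
  exact φ.map_adj_iff.2 hxy

/-- Pseudo-Poincaré inequality on a single orbit of pairs at distance `k`, for graphs in which
every orbit of edges is balanced (the unimodular case). -/
lemma orbSum_le (hc : G.Connected) (hf : ∀ v : V, (G.neighborSet v).Finite)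
    {h : V → V → ℝ≥0∞} (h0 : ∀ a, h a a = 0)
    (htri : ∀ a b c, h a c ≤ h a b + h b c)
    (hun : ∀ x y, G.Adj x y → inDeg G x y = outDeg G x y) (k : ℕ) :
    ∀ x z, G.dist x z = k → orbSum G h x z ≤ (k * edgeSum G h) * outDeg G x z := by
  induction k with
  | zero =>
    intro x z hxz
    obtain rfl := hc.dist_eq_zero_iff.1 hxz
    have : orbSum G h x x = 0 := by
      refine ENNReal.tsum_eq_zero.2 fun a => ENNReal.tsum_eq_zero.2 fun b => ?_
      by_cases hab : ∃ φ : G ≃g G, φ x = a ∧ φ x = b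
      · obtain ⟨φ, rfl, rfl⟩ := hab
        simp [h0]
      · simp [orb, ind_false hab]
    simp [this]
  | succ k ih =>
    intro x z hxz
    obtain ⟨y, hxy, hyz⟩ := exists_adj_dist hc hxz
    have h1 : orbSum G h x y ≤ edgeSum G h * outDeg G x y := by
      refine (orbSum_adj_le h hxy).trans ?_
      obtain ⟨n, hn⟩ := outDeg_nat hc hf x y
      have : 1 ≤ outDeg G x y := by
        have h2 := outDeg_ne_zero (G := G) x y
        rw [hn] at h2 ⊢
        exact_mod_cast Nat.one_le_iff_ne_zero.2 (by exact_mod_cast h2)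
      exact le_mul_of_one_le_right' this
    refine (orbSum_triangle hc hf htri (hun x y hxy) h1 (ih y z hyz)).trans (le_of_eq ?_)
    push_cast; ring

/-- If some orbit of edges is unbalanced (the non-unimodular case), the graph satisfies a linear
isoperimetric inequality with constant `1`: the in- and out-degrees of that orbit are
distinct integers, so counting the orbit by first and by second vertices gives totals
of `g` that differ by at least `∑ g`. -/
lemma tsum_le_edgeSum (hc : G.Connected) (hf : ∀ v : V, (G.neighborSet v).Finite)
    (ht : ∀ u v : V, ∃ φ : G ≃g G, φ u = v) {h : V → V → ℝ≥0∞} {g : V → ℝ≥0∞}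
    (hg : ∀ a b, g a ≤ g b + h a b) (hg' : ∀ a b, g b ≤ g a + h a b)
    (hgt : ∑' a, g a ≠ ∞) {x y : V} (hxy : G.Adj x y) (hne : inDeg G x y ≠ outDeg G x y) :
    ∑' a, g a ≤ edgeSum G h := by
  have h1 : ∑' a, ∑' b, orb G x y a b * g a = outDeg G x y * ∑' a, g a := by
    simp only [ENNReal.tsum_mul_right, tsum_orb_out ht, ENNReal.tsum_mul_left]
  have h2 : ∑' a, ∑' b, orb G x y a b * g b = inDeg G x y * ∑' a, g a := by
    rw [ENNReal.tsum_comm]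
    simp only [ENNReal.tsum_mul_right, tsum_orb_in ht, ENNReal.tsum_mul_left]
  have h3 : outDeg G x y * ∑' a, g a ≤ inDeg G x y * ∑' a, g a + edgeSum G h := by
    refine le_trans ?_ (add_le_add_right (orbSum_adj_le h hxy) _)
    rw [← h1, ← h2, orbSum]
    simp only [← ENNReal.tsum_add, ← mul_add]
    refine ENNReal.tsum_le_tsum fun a => ENNReal.tsum_le_tsum fun b => ?_
    gcongr
    exact hg a b
  have h4 : inDeg G x y * ∑' a, g a ≤ outDeg G x y * ∑' a, g a + edgeSum G h := by
    refine le_trans ?_ (add_le_add_right (orbSum_adj_le h hxy) _)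
    rw [← h1, ← h2, orbSum]
    simp only [← ENNReal.tsum_add, ← mul_add]
    refine ENNReal.tsum_le_tsum fun a => ENNReal.tsum_le_tsum fun b => ?_
    gcongr
    exact hg' a b
  have key : ∀ p q : ℕ, p < q → ∀ S D : ℝ≥0∞, S ≠ ∞ → (q : ℝ≥0∞) * S ≤ p * S + D → S ≤ D := by
    intro p q hpq S D hS hq
    have h5 : (p : ℝ≥0∞) * S + S ≤ p * S + D := by
      refine le_trans ?_ hq
      have : ((p + 1 : ℕ) : ℝ≥0∞) ≤ q := by exact_mod_cast hpq
      calc (p : ℝ≥0∞) * S + S = ((p + 1 : ℕ) : ℝ≥0∞) * S := by push_cast; ring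
        _ ≤ q * S := by gcongr
    exact (ENNReal.add_le_add_iff_left (ENNReal.mul_ne_top (by simp) hS)).1 h5
  obtain ⟨p, hp⟩ := inDeg_nat hc hf x y
  obtain ⟨q, hq⟩ := outDeg_nat hc hf x y
  rw [hp, hq] at h3 h4 hne
  have hne' : p ≠ q := by exact_mod_cast hne
  rcases lt_or_gt_of_ne hne' with hlt | hlt
  · exact key p q hlt _ _ hgt h3
  · exact key q p hlt _ _ hgt h4

/-! ### Averaging over balls -/

/-- Summed over all second vertices `y`, the Markov kernels attached to the orbits of `(o, y)`
have total mass at most one at each pair. -/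
lemma tsum_kernel_le (hc : G.Connected) (hf : ∀ v : V, (G.neighborSet v).Finite)
    (ht : ∀ u v : V, ∃ φ : G ≃g G, φ u = v) (o a b : V) :
    ∑' y, orb G o y a b * (outDeg G o y)⁻¹ ≤ 1 := by
  obtain ⟨φ, hφ⟩ := ht a o
  have h1 : ∀ y, orb G o y a b * (outDeg G o y)⁻¹ =
      orb G o (φ b) o y * (outDeg G o (φ b))⁻¹ := by
    intro y
    rw [← orb_iso φ, hφ]
    by_cases hy : ∃ ψ : G ≃g G, ψ o = o ∧ ψ y = φ b
    · have h2 : outDeg G o y = outDeg G o (φ b) := by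
        obtain ⟨ψ, h3, h4⟩ := hy
        refine tsum_congr fun c => ?_
        rw [← h4]
        conv_rhs => rw [orb_symm]; arg 4; rw [← h3]
        rw [orb_iso, orb_symm]
      rw [h2, orb_symm]
    · have h3 : orb G o y o (φ b) = 0 := ind_false hy
      rw [orb_symm o (φ b), h3]; simp
  simp only [h1, ENNReal.tsum_mul_right]
  exact (ENNReal.mul_inv_cancel (outDeg_ne_zero _ _) (outDeg_ne_top hc hf _ _)).le

/-- If `A` has at most half as many elements as a nonempty set `B` of vertices at distance at most
`N` from `o`, then `g` puts on `A` at most half of its total plus `N` times its gradient. The mass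
at each point of `A` is compared with its averages under the Markov kernels attached to the orbits
of `(o, y)`, for `y` in `B`. -/
lemma two_mul_sum_le (hc : G.Connected) (hf : ∀ v : V, (G.neighborSet v).Finite)
    (ht : ∀ u v : V, ∃ φ : G ≃g G, φ u = v) {h : V → V → ℝ≥0∞} {g : V → ℝ≥0∞}
    (h0 : ∀ a, h a a = 0) (htri : ∀ a b c, h a c ≤ h a b + h b c)
    (hg : ∀ a b, g a ≤ g b + h a b)
    (hun : ∀ x y, G.Adj x y → inDeg G x y = outDeg G x y) (o : V) (N : ℕ)
    (A B : Finset V) (hB : ∀ y ∈ B, G.dist o y ≤ N) (hB0 : B.card ≠ 0)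
    (hAB : 2 * A.card ≤ B.card) :
    2 * ∑ a ∈ A, g a ≤ ∑' a, g a + 2 * (N * edgeSum G h) := by
  have hB0' : (B.card : ℝ≥0∞) ≠ 0 := by exact_mod_cast hB0
  rw [← ENNReal.mul_le_mul_iff_right hB0' (by simp)]
  have h1 : ∀ y, ∀ a, g a ≤ (∑' b, orb G o y a b * (outDeg G o y)⁻¹ * g b)
      + (∑' b, orb G o y a b * h a b) * (outDeg G o y)⁻¹ := by
    intro y a
    have : ∑' b, orb G o y a b * (outDeg G o y)⁻¹ = 1 := by
      rw [ENNReal.tsum_mul_right, tsum_orb_out ht]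
      exact ENNReal.mul_inv_cancel (outDeg_ne_zero _ _) (outDeg_ne_top hc hf _ _)
    calc g a = ∑' b, orb G o y a b * (outDeg G o y)⁻¹ * g a := by
          rw [ENNReal.tsum_mul_right, this, one_mul]
      _ ≤ ∑' b, orb G o y a b * (outDeg G o y)⁻¹ * (g b + h a b) := by
          refine ENNReal.tsum_le_tsum fun b => ?_
          gcongr
          exact hg a b
      _ = _ := by
          rw [← ENNReal.tsum_mul_right, ← ENNReal.tsum_add]
          exact tsum_congr fun b => by ring
  have h2 : ∀ y ∈ B, ∑ a ∈ A, g a ≤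
      (∑ a ∈ A, ∑' b, orb G o y a b * (outDeg G o y)⁻¹ * g b) + N * edgeSum G h := by
    intro y hy
    refine (Finset.sum_le_sum fun a _ => h1 y a).trans ?_
    rw [Finset.sum_add_distrib]
    gcongr
    rw [← Finset.sum_mul]
    calc (∑ a ∈ A, ∑' b, orb G o y a b * h a b) * (outDeg G o y)⁻¹
        ≤ orbSum G h o y * (outDeg G o y)⁻¹ := by
          gcongr; exact ENNReal.sum_le_tsum A
      _ ≤ (G.dist o y * edgeSum G h * outDeg G o y) * (outDeg G o y)⁻¹ := by
          gcongr; exact orbSum_le hc hf h0 htri hun _ o y rfl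
      _ = G.dist o y * edgeSum G h := by
          rw [mul_assoc, ENNReal.mul_inv_cancel (outDeg_ne_zero _ _) (outDeg_ne_top hc hf _ _),
            mul_one]
      _ ≤ N * edgeSum G h := by
          gcongr; exact hB y hy
  have h3 : ∑ y ∈ B, ∑ a ∈ A, ∑' b, orb G o y a b * (outDeg G o y)⁻¹ * g b
      ≤ A.card * ∑' b, g b := by
    rw [Finset.sum_comm, ← nsmul_eq_mul]
    refine Finset.sum_le_card_nsmul _ _ _ fun a _ => ?_
    rw [← Summable.tsum_finsetSum fun _ _ => ENNReal.summable]
    refine ENNReal.tsum_le_tsum fun b => ?_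
    rw [← Finset.sum_mul]
    calc _ ≤ 1 * g b := by
          gcongr
          exact (ENNReal.sum_le_tsum B).trans (tsum_kernel_le hc hf ht o a b)
      _ = g b := one_mul _
  have h4 : B.card * ∑ a ∈ A, g a ≤ A.card * ∑' b, g b + B.card * (N * edgeSum G h) := by
    have := Finset.sum_le_sum h2
    rw [Finset.sum_add_distrib, Finset.sum_const, Finset.sum_const, nsmul_eq_mul,
      nsmul_eq_mul] at this
    exact this.trans (by gcongr)
  calc (B.card : ℝ≥0∞) * (2 * ∑ a ∈ A, g a) = 2 * (B.card * ∑ a ∈ A, g a) := by ring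
    _ ≤ 2 * (A.card * ∑' b, g b + B.card * (N * edgeSum G h)) := by gcongr
    _ = ((2 * A.card : ℕ) : ℝ≥0∞) * ∑' b, g b + B.card * (2 * (N * edgeSum G h)) := by
        push_cast; ring
    _ ≤ B.card * ∑' b, g b + B.card * (2 * (N * edgeSum G h)) := by
        gcongr
    _ = _ := by ring

/-- The weighted form of the averaging estimate: the part of `g` on the sublevel set `{w ≤ r}` is
absorbed, and the rest is kept. -/
lemma tsum_le_of_weight (hc : G.Connected) (hf : ∀ v : V, (G.neighborSet v).Finite)
    (ht : ∀ u v : V, ∃ φ : G ≃g G, φ u = v) [Infinite V] {h : V → V → ℝ≥0∞} {g : V → ℝ≥0∞}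
    (h0 : ∀ a, h a a = 0) (htri : ∀ a b c, h a c ≤ h a b + h b c)
    (hg : ∀ a b, g a ≤ g b + h a b) (hg' : ∀ a b, g b ≤ g a + h a b)
    (hgt : ∑' a, g a ≠ ∞) (w : V → ℝ) (r : ℝ) (hr : 1 ≤ r)
    (hw : ∀ m₀ : V, {m | w m ≤ r}.encard ≤ {n | (G.dist m₀ n : ℝ) < r}.encard) :
    ∑' a, g a ≤ 6 * ⌈r⌉₊ * edgeSum G h + 2 * ∑' a, ind (r < w a) * g a := by
  have hn1 : 1 ≤ ⌈r⌉₊ := Nat.one_le_ceil_iff.2 (by linarith)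
  generalize hn : ⌈r⌉₊ = n at *
  have hball : ∀ o, {x | (G.dist o x : ℝ) < r} = {x | G.dist o x < n} := by
    intro o
    ext x
    simp only [Set.mem_ofPred_eq, ← hn, Nat.lt_ceil]
  by_cases hun : ∀ x y, G.Adj x y → inDeg G x y = outDeg G x y
  · obtain ⟨o⟩ := hc.nonempty
    have hw' := hw o
    rw [hball] at hw'
    have hbf := finite_ball' hc hf n o
    have hAf : {m | w m ≤ r}.Finite := Set.finite_of_encard_le_coe
      (hw'.trans (le_of_eq hbf.cast_ncard_eq.symm))
    have hBf := finite_ball' hc hf (3 * n) o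
    have hA : hAf.toFinset.card ≤ {x | G.dist o x < n}.ncard := by
      rw [← Set.ncard_eq_toFinset_card _ hAf]
      rw [← hbf.cast_ncard_eq, ← hAf.cast_ncard_eq] at hw'
      exact_mod_cast hw'
    have h2 := two_mul_ball_le hc hf ht n o
    have hB : hBf.toFinset.card = {x | G.dist o x < 3 * n}.ncard :=
      (Set.ncard_eq_toFinset_card _ hBf).symm
    have hB0 : hBf.toFinset.card ≠ 0 := by
      refine (Finset.card_pos.2 ⟨o, ?_⟩).ne'
      simp only [Set.Finite.mem_toFinset, Set.mem_ofPred_eq, SimpleGraph.dist_self]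
      omega
    have key := two_mul_sum_le hc hf ht h0 htri hg hun o (3 * n) hAf.toFinset hBf.toFinset
      (by intro y hy; simp only [Set.Finite.mem_toFinset, Set.mem_ofPred_eq] at hy; omega)
      hB0 (by omega)
    have hsplit : ∑' a, g a = ∑ a ∈ hAf.toFinset, g a + ∑' a, ind (r < w a) * g a := by
      have h3 : ∑ a ∈ hAf.toFinset, g a = ∑' a, ind (w a ≤ r) * g a := by
        rw [tsum_eq_sum (s := hAf.toFinset)]
        · refine Finset.sum_congr rfl fun a ha => ?_
          rw [ind_true (by simpa using ha), one_mul]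
        · intro a ha
          rw [ind_false (by simpa using ha), zero_mul]
      rw [h3, ← ENNReal.tsum_add]
      refine tsum_congr fun a => ?_
      rcases le_or_gt (w a) r with ha | ha
      · simp [ind_true ha, ind_false (not_lt.2 ha)]
      · simp [ind_true ha, ind_false (not_le.2 ha)]
    refine (ENNReal.add_le_add_iff_left hgt).1 ?_
    calc ∑' a, g a + ∑' a, g a
        = 2 * ∑ a ∈ hAf.toFinset, g a + 2 * ∑' a, ind (r < w a) * g a := by
          rw [hsplit]; ring
      _ ≤ _ + 2 * ∑' a, ind (r < w a) * g a := add_le_add_left key _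
      _ = _ := by push_cast; ring
  · push Not at hun
    obtain ⟨x, y, hxy, hne⟩ := hun
    refine (tsum_le_edgeSum hc hf ht hg hg' hgt hxy hne).trans ?_
    refine le_trans ?_ le_self_add
    refine le_mul_of_one_le_left' ?_
    have : 1 ≤ 6 * n := by omega
    exact_mod_cast this

/-! ### Passage to real sums -/

lemma tsum_ofReal_eq {F : V → ℝ} (hF : (Function.support F).Finite) (h0 : ∀ a, 0 ≤ F a) :
    ∑' a, ENNReal.ofReal (F a) = ENNReal.ofReal (∑ᶠ a, F a) := by
  rw [← tsum_eq_finsum (L := .unconditional V) hF,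
    ENNReal.ofReal_tsum_of_nonneg h0 (summable_of_hasFiniteSupport hF)]

lemma gradAbs_nonneg (f : V → ℝ) (a : V) : 0 ≤ gradAbs G f a :=
  finsum_nonneg fun _ => finsum_nonneg fun _ => abs_nonneg _

lemma tsum_adj_eq_gradAbs (hf : ∀ v : V, (G.neighborSet v).Finite) (f : V → ℝ) (a : V) :
    ∑' b, ind (G.Adj a b) * ENNReal.ofReal |f a - f b| = ENNReal.ofReal (gradAbs G f a) := by
  rw [gradAbs, finsum_mem_def, ← tsum_ofReal_eq]
  · refine tsum_congr fun b => ?_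
    by_cases hab : G.Adj a b
    · rw [ind_true hab, one_mul, Set.indicator_of_mem (by exact hab)]
    · rw [ind_false hab, zero_mul, Set.indicator_of_notMem (by exact hab), ENNReal.ofReal_zero]
  · exact (hf a).subset Set.support_indicator_subset
  · exact fun b => Set.indicator_nonneg (fun _ _ => abs_nonneg _) _

lemma finite_support_gradAbs (hf : ∀ v : V, (G.neighborSet v).Finite) {f : V → ℝ}
    (hs : (Function.support f).Finite) : (Function.support (gradAbs G f)).Finite := by
  refine (hs.union (hs.biUnion fun v _ => hf v)).subset ?_
  intro a ha
  by_contra hcon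
  simp only [Set.mem_union, Function.mem_support, Set.mem_iUnion, not_or, not_exists,
    not_not] at hcon
  obtain ⟨h1, h2⟩ := hcon
  refine ha (finsum_mem_eq_zero_of_forall_eq_zero fun b hb => ?_)
  have : f b = 0 := by
    by_contra hb0
    exact h2 b hb0 (SimpleGraph.Adj.symm hb)
  simp [h1, this]

lemma rpow_sub_rpow_le {x y p : ℝ} (hx : 0 ≤ x) (hy : 0 ≤ y) (hp : 1 ≤ p) :
    x ^ p - y ^ p ≤ p * (x - y) * x ^ (p - 1) := by
  rcases hx.eq_or_lt with rfl | hx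
  · have h1 : (0 : ℝ) ^ p = 0 := Real.zero_rpow (by linarith)
    rcases hp.eq_or_lt with rfl | hp
    · simp
    · have h2 : (0 : ℝ) ^ (p - 1) = 0 := Real.zero_rpow (by linarith)
      have := Real.rpow_nonneg hy p
      rw [h1, h2]; linarith
  · have h1 := one_add_mul_self_le_rpow_one_add (s := y / x - 1)
      (by have := div_nonneg hy hx.le; linarith) hp
    rw [show 1 + (y / x - 1) = y / x by ring, Real.div_rpow hy hx.le,
      le_div_iff₀ (Real.rpow_pos_of_pos hx p)] at h1
    have h2 : x ^ p = x * x ^ (p - 1) := by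
      rw [Real.rpow_sub_one hx.ne']; field_simp
    have h3 : (1 + p * (y / x - 1)) * (x * x ^ (p - 1)) =
        x * x ^ (p - 1) - p * (x - y) * x ^ (p - 1) := by
      field_simp; ring
    rw [h2] at h1 ⊢
    linarith

lemma abs_rpow_sub_le {u v p : ℝ} (hp : 1 ≤ p) :
    |(|u| ^ p - |v| ^ p)| ≤ p * (|u| ^ (p - 1) + |v| ^ (p - 1)) * |u - v| := by
  have key : ∀ u v : ℝ, |u| ^ p - |v| ^ p ≤ p * (|u| ^ (p - 1) + |v| ^ (p - 1)) * |u - v| := by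
    intro u v
    have h1 := rpow_sub_rpow_le (abs_nonneg u) (abs_nonneg v) hp
    have h2 := abs_sub_abs_le_abs_sub u v
    have h3 := Real.rpow_nonneg (abs_nonneg u) (p - 1)
    have h4 := Real.rpow_nonneg (abs_nonneg v) (p - 1)
    calc _ ≤ _ := h1
      _ ≤ p * |u - v| * |u| ^ (p - 1) := by gcongr
      _ = p * |u| ^ (p - 1) * |u - v| := by ring
      _ ≤ _ := by gcongr; linarith
  refine abs_le'.2 ⟨key u v, ?_⟩
  have := key v u
  rw [abs_sub_comm v u] at this
  linarith

/-- The chain rule `‖∇ |f|^p‖₁ ≤ 2 p ∑ |f|^(p-1) |∇f|`. -/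
lemma edgeSum_rpow_le (hf : ∀ v : V, (G.neighborSet v).Finite) {f : V → ℝ}
    (hs : (Function.support f).Finite) {p : ℝ} (hp : 1 ≤ p) :
    edgeSum G (fun a b => ENNReal.ofReal |(|f a| ^ p - |f b| ^ p)|) ≤
      ENNReal.ofReal (2 * p * ∑ᶠ a, |f a| ^ (p - 1) * gradAbs G f a) := by
  set k : V → V → ℝ≥0∞ := fun a b => ENNReal.ofReal |f a - f b| with hk
  set u : V → ℝ≥0∞ := fun a => ENNReal.ofReal (|f a| ^ (p - 1)) with hu
  have hu0 : ∀ a, 0 ≤ |f a| ^ (p - 1) := fun a => Real.rpow_nonneg (abs_nonneg _) _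
  have h1 : ∑' a, ∑' b, ind (G.Adj a b) * (u a * k a b) =
      ENNReal.ofReal (∑ᶠ a, |f a| ^ (p - 1) * gradAbs G f a) := by
    rw [← tsum_ofReal_eq]
    · refine tsum_congr fun a => ?_
      rw [ENNReal.ofReal_mul (hu0 a), ← tsum_adj_eq_gradAbs hf, ← ENNReal.tsum_mul_left]
      exact tsum_congr fun b => by ring
    · exact (finite_support_gradAbs hf hs).subset (Function.support_mul_subset_right _ _)
    · exact fun a => mul_nonneg (hu0 a) (gradAbs_nonneg f a)
  have h2 : ∑' a, ∑' b, ind (G.Adj a b) * (u b * k a b) =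
      ∑' a, ∑' b, ind (G.Adj a b) * (u a * k a b) := by
    rw [ENNReal.tsum_comm]
    refine tsum_congr fun a => tsum_congr fun b => ?_
    rw [ind_congr (G.adj_comm b a), hk]
    simp only [abs_sub_comm (f b) (f a)]
  calc _ ≤ ∑' a, ∑' b, ENNReal.ofReal p *
        (ind (G.Adj a b) * (u a * k a b) + ind (G.Adj a b) * (u b * k a b)) := by
        refine ENNReal.tsum_le_tsum fun a => ENNReal.tsum_le_tsum fun b => ?_
        have h3 : ENNReal.ofReal |(|f a| ^ p - |f b| ^ p)| ≤
            ENNReal.ofReal p * (u a + u b) * k a b := by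
          rw [hu, hk]
          simp only []
          rw [← ENNReal.ofReal_add (hu0 a) (hu0 b), ← ENNReal.ofReal_mul (by linarith),
            ← ENNReal.ofReal_mul (mul_nonneg (by linarith) (add_nonneg (hu0 a) (hu0 b)))]
          exact ENNReal.ofReal_le_ofReal (abs_rpow_sub_le hp)
        calc _ ≤ ind (G.Adj a b) * (ENNReal.ofReal p * (u a + u b) * k a b) := by gcongr
          _ = _ := by ring
    _ = ENNReal.ofReal p * (2 * ∑' a, ∑' b, ind (G.Adj a b) * (u a * k a b)) := by
        simp only [ENNReal.tsum_mul_left, ENNReal.tsum_add]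
        rw [h2, two_mul]
    _ = _ := by
        rw [h1, ENNReal.ofReal_mul (p := 2 * p) (by linarith),
          ENNReal.ofReal_mul (p := 2) (by norm_num), ENNReal.ofReal_ofNat]
        ring

lemma lpN_nonneg (p : ℝ) (f : V → ℝ) : 0 ≤ lpN p f :=
  Real.rpow_nonneg (finsum_nonneg fun _ => Real.rpow_nonneg (abs_nonneg _) _) _

lemma lpN_rpow {p : ℝ} (hp : 1 ≤ p) (f : V → ℝ) : lpN p f ^ p = ∑ᶠ a, |f a| ^ p := by
  rw [lpN, ← Real.rpow_mul (finsum_nonneg fun _ => Real.rpow_nonneg (abs_nonneg _) _),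
    one_div_mul_cancel (by linarith), Real.rpow_one]

lemma holder_gradAbs (hf : ∀ v : V, (G.neighborSet v).Finite) {f : V → ℝ}
    (hs : (Function.support f).Finite) {p : ℝ} (hp : 1 ≤ p) :
    ∑ᶠ a, |f a| ^ (p - 1) * gradAbs G f a ≤ lpN p f ^ (p - 1) * lpN p (gradAbs G f) := by
  classical
  rcases hp.eq_or_lt with rfl | hp
  · simp [lpN, abs_of_nonneg (gradAbs_nonneg f _)]
  have hg := finite_support_gradAbs (G := G) hf hs
  set T : Finset V := hs.toFinset ∪ hg.toFinset with hT
  have hp0 : 0 < p := by linarith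
  have e1 : ∑ᶠ a, |f a| ^ (p - 1) * gradAbs G f a =
      ∑ a ∈ T, |f a| ^ (p - 1) * gradAbs G f a := by
    refine finsum_eq_sum_of_support_subset _ ?_
    refine (Function.support_mul_subset_right _ _).trans ?_
    intro a ha
    simp only [hT, Finset.coe_union, Set.Finite.coe_toFinset]
    exact Or.inr ha
  have e2 : ∀ F : V → ℝ, Function.support F ⊆ T → ∑ᶠ a, |F a| ^ p = ∑ a ∈ T, |F a| ^ p := by
    intro F hF
    refine finsum_eq_sum_of_support_subset _ (subset_trans ?_ hF)
    intro a ha h0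
    exact ha (by simp [h0, Real.zero_rpow hp0.ne'])
  have hpq : (p / (p - 1)).HolderConjugate p := by
    have := Real.HolderConjugate.conjExponent hp
    exact this.symm
  have hH := Real.inner_le_Lp_mul_Lq T (fun a => |f a| ^ (p - 1)) (gradAbs G f) hpq
  rw [e1]
  refine hH.trans (le_of_eq ?_)
  have hp1 : p - 1 ≠ 0 := by linarith
  congr 1
  · rw [lpN, e2 f (by simp [hT]),
      ← Real.rpow_mul (Finset.sum_nonneg fun _ _ => Real.rpow_nonneg (abs_nonneg _) _)]
    congr 1
    · refine Finset.sum_congr rfl fun a _ => ?_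
      rw [abs_of_nonneg (Real.rpow_nonneg (abs_nonneg _) _), ← Real.rpow_mul (abs_nonneg _)]
      congr 1
      field_simp
    · field_simp
  · rw [lpN, e2 _ (by simp [hT])]

/-- The additive form of the uncertainty inequality, at scale `r`. -/
lemma additive_ineq (hc : G.Connected) (hf : ∀ v : V, (G.neighborSet v).Finite)
    (ht : ∀ u v : V, ∃ φ : G ≃g G, φ u = v) [Infinite V] (w : V → ℝ) (r : ℝ) (hr : 1 ≤ r)
    (hw : ∀ m₀ : V, {m | w m ≤ r}.encard ≤ {n | (G.dist m₀ n : ℝ) < r}.encard)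
    {f : V → ℝ} (hs : (Function.support f).Finite) {p : ℝ} (hp : 1 ≤ p) {α : ℝ} (hα : 0 < α) :
    lpN p f ^ p ≤ 24 * r * p * (lpN p f ^ (p - 1) * lpN p (gradAbs G f)) +
      2 * (r ^ (-(α * p)) * lpN p (fun m => w m ^ α * f m) ^ p) := by
  have hp0 : 0 < p := by linarith
  have hrp : 0 ≤ r ^ (-(α * p)) := Real.rpow_nonneg (by linarith) _
  have hfin : ∀ F : V → ℝ, Function.support F ⊆ Function.support f →
      (Function.support fun a => |F a| ^ p).Finite := by
    intro F hF
    refine hs.subset (subset_trans ?_ hF)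
    intro a ha h0
    exact ha (by simp [h0, Real.zero_rpow hp0.ne'])
  have hnn : ∀ F : V → ℝ, ∀ a, 0 ≤ |F a| ^ p := fun F a => Real.rpow_nonneg (abs_nonneg _) _
  have hwf := hfin (fun m => w m ^ α * f m) (Function.support_mul_subset_right _ _)
  have hff := hfin f subset_rfl
  have key := tsum_le_of_weight hc hf ht (g := fun a => ENNReal.ofReal (|f a| ^ p))
    (h := fun a b => ENNReal.ofReal |(|f a| ^ p - |f b| ^ p)|) (by simp)
    (by
      intro a b c
      rw [← ENNReal.ofReal_add (abs_nonneg _) (abs_nonneg _)]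
      exact ENNReal.ofReal_le_ofReal (abs_sub_le _ _ _))
    (by
      intro a b
      rw [← ENNReal.ofReal_add (hnn f b) (abs_nonneg _)]
      refine ENNReal.ofReal_le_ofReal ?_
      have := le_abs_self (|f a| ^ p - |f b| ^ p)
      linarith)
    (by
      intro a b
      rw [← ENNReal.ofReal_add (hnn f a) (abs_nonneg _)]
      refine ENNReal.ofReal_le_ofReal ?_
      have := neg_abs_le (|f a| ^ p - |f b| ^ p)
      linarith)
    (by rw [tsum_ofReal_eq hff (hnn f)]; exact ENNReal.ofReal_ne_top) w r hr hw
  have hD := (edgeSum_rpow_le (G := G) hf hs hp).trans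
    (ENNReal.ofReal_le_ofReal (mul_le_mul_of_nonneg_left (holder_gradAbs hf hs hp)
      (by linarith : 0 ≤ 2 * p)))
  have hceil : (6 * ⌈r⌉₊ : ℝ≥0∞) ≤ ENNReal.ofReal (12 * r) := by
    rw [← ENNReal.ofReal_natCast, ← ENNReal.ofReal_ofNat 6, ← ENNReal.ofReal_mul (by norm_num)]
    refine ENNReal.ofReal_le_ofReal ?_
    have := Nat.ceil_lt_add_one (show 0 ≤ r by linarith)
    linarith
  have hT : ∑' a, ind (r < w a) * ENNReal.ofReal (|f a| ^ p) ≤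
      ENNReal.ofReal (r ^ (-(α * p)) * lpN p (fun m => w m ^ α * f m) ^ p) := by
    rw [lpN_rpow hp, ENNReal.ofReal_mul hrp, ← tsum_ofReal_eq hwf (hnn _),
      ← ENNReal.tsum_mul_left]
    refine ENNReal.tsum_le_tsum fun a => ?_
    by_cases ha : r < w a
    · rw [ind_true ha, one_mul, ← ENNReal.ofReal_mul hrp]
      refine ENNReal.ofReal_le_ofReal ?_
      have hwa : 0 < w a := by linarith
      rw [abs_mul, abs_of_nonneg (Real.rpow_nonneg hwa.le α),
        Real.mul_rpow (Real.rpow_nonneg hwa.le α) (abs_nonneg _), ← Real.rpow_mul hwa.le,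
        ← mul_assoc]
      refine le_mul_of_one_le_left (hnn f a) ?_
      rw [Real.rpow_neg (by linarith), inv_mul_eq_div,
        one_le_div (Real.rpow_pos_of_pos (by linarith) _)]
      exact Real.rpow_le_rpow (by linarith) ha.le (by positivity)
    · rw [ind_false ha, zero_mul]; exact zero_le
  have hN1 : 0 ≤ lpN p f ^ (p - 1) * lpN p (gradAbs G f) :=
    mul_nonneg (Real.rpow_nonneg (lpN_nonneg _ _) _) (lpN_nonneg _ _)
  have hW1 : 0 ≤ r ^ (-(α * p)) * lpN p (fun m => w m ^ α * f m) ^ p :=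
    mul_nonneg hrp (Real.rpow_nonneg (lpN_nonneg _ _) _)
  rw [tsum_ofReal_eq hff (hnn f), ← lpN_rpow hp] at key
  have h2 : ENNReal.ofReal (lpN p f ^ p) ≤ ENNReal.ofReal
      ((12 * r) * (2 * p * (lpN p f ^ (p - 1) * lpN p (gradAbs G f))) +
      2 * (r ^ (-(α * p)) * lpN p (fun m => w m ^ α * f m) ^ p)) := by
    rw [ENNReal.ofReal_add (by positivity) (by positivity),
      ENNReal.ofReal_mul (p := 12 * r) (by linarith), ENNReal.ofReal_mul (p := 2) (by norm_num),
      ENNReal.ofReal_ofNat]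
    refine key.trans ?_
    gcongr
  have h3 := (ENNReal.ofReal_le_ofReal_iff (by positivity)).1 h2
  refine h3.trans (le_of_eq ?_)
  ring

end Graph

/-- Optimization in the scale `r`: the choice `r = (4 W / N) ^ (1 / α)` makes the last term at most
half of the left-hand side. -/
lemma optimize {N D W p α : ℝ} (hN : 0 ≤ N) (hD : 0 ≤ D) (hNW : N ≤ W) (hp : 1 ≤ p)
    (hα : 0 < α)
    (H : ∀ r : ℝ, 1 ≤ r →
      N ^ p ≤ 24 * r * p * (N ^ (p - 1) * D) + 2 * (r ^ (-(α * p)) * W ^ p)) :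
    N ≤ 192 * p ^ (α / (α + 1)) * D ^ (α / (α + 1)) * W ^ (1 / (α + 1)) := by
  have hW : 0 ≤ W := hN.trans hNW
  have hp0 : 0 < p := by linarith
  rcases hN.eq_or_lt with rfl | hN
  · positivity
  have hW0 : 0 < W := by linarith
  set X := 4 * W / N with hX
  have hX1 : 1 ≤ X := by rw [hX, one_le_div hN]; linarith
  have hX0 : 0 < X := by linarith
  have h1 := H (X ^ (1 / α)) (Real.one_le_rpow hX1 (by positivity))
  rw [← Real.rpow_mul hX0.le, show 1 / α * -(α * p) = -p by field_simp,
    Real.rpow_neg hX0.le] at h1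
  have h2 : 2 * ((X ^ p)⁻¹ * W ^ p) ≤ N ^ p / 2 := by
    rw [hX, Real.div_rpow (by positivity) hN.le, Real.mul_rpow (by norm_num) hW]
    have h4 : (4 : ℝ) ≤ 4 ^ p := by
      simpa using Real.rpow_le_rpow_of_exponent_le (by norm_num : (1 : ℝ) ≤ 4) hp
    have hWp : 0 < W ^ p := Real.rpow_pos_of_pos hW0 _
    have hNp : 0 < N ^ p := Real.rpow_pos_of_pos hN _
    have h5 : (4 ^ p * W ^ p / N ^ p)⁻¹ * W ^ p = N ^ p / 4 ^ p := by field_simp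
    rw [h5]
    have : N ^ p / 4 ^ p ≤ N ^ p / 4 := by gcongr
    linarith
  have h3 : N ^ p = N ^ (p - 1) * N := by
    rw [Real.rpow_sub_one hN.ne']; field_simp
  have hNp : 0 < N ^ (p - 1) := Real.rpow_pos_of_pos hN _
  have h4 : N ≤ 48 * p * D * X ^ (1 / α) := by
    have h5 : N ^ (p - 1) * N ≤ N ^ (p - 1) * (48 * p * D * X ^ (1 / α)) := by
      rw [h3] at h1 h2
      linarith
    exact le_of_mul_le_mul_left h5 hNp
  have hα1 : 0 < α + 1 := by linarith
  have hθ0 : 0 ≤ α / (α + 1) := by positivity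
  have hθ1 : α / (α + 1) ≤ 1 := by rw [div_le_one hα1]; linarith
  have hη0 : 0 ≤ 1 / (α + 1) := by positivity
  have hη1 : 1 / (α + 1) ≤ 1 := by rw [div_le_one hα1]; linarith
  have h6 : N ^ (α / (α + 1)) ≤
      48 ^ (α / (α + 1)) * p ^ (α / (α + 1)) * D ^ (α / (α + 1)) * X ^ (1 / (α + 1)) := by
    have := Real.rpow_le_rpow hN.le h4 hθ0
    rwa [Real.mul_rpow (by positivity) (by positivity), Real.mul_rpow (by positivity) hD,
      Real.mul_rpow (by norm_num) hp0.le, ← Real.rpow_mul hX0.le,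
      show 1 / α * (α / (α + 1)) = 1 / (α + 1) by field_simp] at this
  have h7 : X ^ (1 / (α + 1)) * N ^ (1 / (α + 1)) = 4 ^ (1 / (α + 1)) * W ^ (1 / (α + 1)) := by
    rw [← Real.mul_rpow hX0.le hN.le, ← Real.mul_rpow (by norm_num) hW, hX]
    congr 1
    field_simp
  have h8 : N = N ^ (α / (α + 1)) * N ^ (1 / (α + 1)) := by
    rw [← Real.rpow_add hN, ← add_div, div_self hα1.ne', Real.rpow_one]
  have h9 : (48 : ℝ) ^ (α / (α + 1)) ≤ 48 := by
    simpa using Real.rpow_le_rpow_of_exponent_le (by norm_num : (1 : ℝ) ≤ 48) hθ1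
  have h10 : (4 : ℝ) ^ (1 / (α + 1)) ≤ 4 := by
    simpa using Real.rpow_le_rpow_of_exponent_le (by norm_num : (1 : ℝ) ≤ 4) hη1
  calc N = N ^ (α / (α + 1)) * N ^ (1 / (α + 1)) := h8
    _ ≤ 48 ^ (α / (α + 1)) * p ^ (α / (α + 1)) * D ^ (α / (α + 1)) * X ^ (1 / (α + 1)) *
        N ^ (1 / (α + 1)) := by gcongr
    _ = 48 ^ (α / (α + 1)) * 4 ^ (1 / (α + 1)) *
        (p ^ (α / (α + 1)) * D ^ (α / (α + 1)) * W ^ (1 / (α + 1))) := by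
        rw [mul_assoc _ (X ^ _), h7]; ring
    _ ≤ 48 * 4 * (p ^ (α / (α + 1)) * D ^ (α / (α + 1)) * W ^ (1 / (α + 1))) := by gcongr
    _ = _ := by ring

lemma lpN_le_weighted {V : Type} {w f : V → ℝ} (hw1 : ∀ m, 1 ≤ w m)
    (hs : (Function.support f).Finite) {p : ℝ} (hp : 1 ≤ p) {α : ℝ} (hα : 0 < α) :
    lpN p f ≤ lpN p (fun m => w m ^ α * f m) := by
  have hp0 : 0 < p := by linarith
  refine Real.rpow_le_rpow (finsum_nonneg fun _ => Real.rpow_nonneg (abs_nonneg _) _) ?_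
    (by positivity)
  rw [finsum_eq_sum_of_support_subset (s := hs.toFinset), finsum_eq_sum_of_support_subset
    (s := hs.toFinset)]
  · refine Finset.sum_le_sum fun a _ => ?_
    refine Real.rpow_le_rpow (abs_nonneg _) ?_ hp0.le
    rw [abs_mul]
    refine le_mul_of_one_le_left (abs_nonneg _) ?_
    exact (Real.one_le_rpow (hw1 a) hα.le).trans (le_abs_self _)
  all_goals
    rw [Set.Finite.coe_toFinset]
    exact fun a ha h0 => ha (by simp [h0, Real.zero_rpow hp0.ne'])

end TransitiveUncertainty

/-- Discrete `ℓ^p` uncertainty inequality on infinite vertex-transitive graphs: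
there is a universal constant `C > 0` such that for every connected, locally finite,
countable, vertex-transitive graph with infinite vertex set, every weight
`w : V → [1,∞)` whose sublevel sets `{w ≤ r}` have cardinality at most that of a
ball of radius `r`, every finitely supported `f : V → ℝ`, every `1 ≤ p < ∞` and
every `α > 0`:
`‖f‖_{ℓ^p} ≤ C p^{α/(α+1)} ‖∇f‖_{ℓ^p}^{α/(α+1)} ‖w^α f‖_{ℓ^p}^{1/(α+1)}`. -/
theorem discrete_uncertainty_infinite :
    ∃ C : ℝ, 0 < C ∧
      ∀ (V : Type) (G : SimpleGraph V), Countable V → G.Connected →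
        (∀ v : V, (G.neighborSet v).Finite) →
        (∀ u v : V, ∃ φ : G ≃g G, φ u = v) →
        Infinite V →
        ∀ w : V → ℝ, (∀ m, 1 ≤ w m) →
        (∀ r : ℝ, 1 ≤ r → ∀ m₀ : V,
          {m | w m ≤ r}.encard ≤ {n | (G.dist m₀ n : ℝ) < r}.encard) →
        ∀ f : V → ℝ, (Function.support f).Finite →
        ∀ p : ℝ, 1 ≤ p → ∀ α : ℝ, 0 < α →
          lpN p f ≤ C * p ^ (α / (α + 1)) *
            lpN p (gradAbs G f) ^ (α / (α + 1)) *
            lpN p (fun m => w m ^ α * f m) ^ (1 / (α + 1)) := by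
  refine ⟨192, by norm_num, ?_⟩
  intro V G _ hc hf ht _ w hw1 hw f hs p hp α hα
  exact TransitiveUncertainty.optimize (TransitiveUncertainty.lpN_nonneg _ _)
    (TransitiveUncertainty.lpN_nonneg _ _) (TransitiveUncertainty.lpN_le_weighted hw1 hs hp hα)
    hp hα fun r hr => TransitiveUncertainty.additive_ineq hc hf ht w r hr (hw r hr) hs hp hα
end

section
/- There exists a universal constant C > 0 (independent of the graph, the group, p, α and f) such that the following holds. Suppose V is finite, and let w : V → [1,∞) be a function such that |{m ∈ V : w(m) ≤ r}| ≤ Γ(r) for every real r ≥ 1. Then for every f : V → ℝ with Σ_{m∈V} f(m) = 0, every real p with 1 ≤ p < ∞, and every α > 0, one has ‖f‖_{ℓ^p(V)} ≤ C · p^{α/(α+1)} · ‖∇f‖_{ℓ^p(V)}^{α/(α+1)} · ‖w^α f‖_{ℓ^p(V)}^{1/(α+1)}. -/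
/-!
Two ingredients give the inequality, with no dependence on `p` beyond `1 ≤ p ^ (α / (α + 1))`.

*Poincaré at scale `R`* (`poincare`). Averaging over the finite automorphism group, which acts
transitively, `∑_m ∑_{d(m,n) < R} |f m - f n| ^ p ≤ Γ(R) R ^ p ‖∇f‖_p ^ p`: pulled back to the
group, `f` at the two ends of a walk differs in `ℓ^p` by at most its length times the normalised
gradient (`walk_bound`).

*Doubling* (`doubling`). For `s ≥ 1`, either `Γ(4 s) ≥ 2 Γ(s)` or the diameter is below `2 s`.

In the first case the set `E = {w ≤ s}` has at most `Γ(s)` points, so at least half of every ball of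
radius `4 s` lies off `E`. Comparing `f` on `E` with its values on that half (`core`), and bounding
`f` off `E` by `s ^ (-α) w ^ α |f|`, gives
`‖f‖_p ≤ 8 s ‖∇f‖_p + 4 s ^ (-α) ‖w ^ α f‖_p` (`additive_bound`). In the second case the mean-zero
condition and Jensen's inequality bound `‖f‖_p` by `2 s ‖∇f‖_p` (`poincare_global`). The theorem
follows by choosing `s` to balance the two terms. The balancing `s` is at least `1` unless
`‖w ^ α f‖_p < ‖∇f‖_p`, where `‖f‖_p ≤ ‖w ^ α f‖_p` is enough, and
if `‖∇f‖_p = 0` then `f = 0` by `poincare_global`.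
-/

open scoped BigOperators

/-! ### Balls and the averaging over automorphisms -/

/-- The open ball `B(m, R) = {n : d(m, n) < R}` as a finset. -/
noncomputable def distBall {V : Type} [Fintype V] (G : SimpleGraph V) (m : V) (R : ℝ) : Finset V :=
  by classical exact Finset.univ.filter (fun n => (G.dist m n : ℝ) < R)

theorem mem_distBall {V : Type} [Fintype V] {G : SimpleGraph V} {m n : V} {R : ℝ} :
    n ∈ distBall G m R ↔ (G.dist m n : ℝ) < R := by
  simp [distBall]

theorem dist_iso {V : Type} {G : SimpleGraph V} (hG : G.Connected) (φ : G ≃g G) (u v : V) :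
    G.dist (φ u) (φ v) = G.dist u v := by
  have key : ∀ (ψ : G ≃g G) (a b : V), G.dist (ψ a) (ψ b) ≤ G.dist a b := by
    intro ψ a b
    obtain ⟨q, hq⟩ := hG.exists_walk_length_eq_dist a b
    rw [← hq, ← SimpleGraph.Walk.length_map ψ.toHom q]
    exact SimpleGraph.dist_le _
  refine le_antisymm (key φ u v) ?_
  simpa using key φ.symm (φ u) (φ v)

theorem sum_distBall_iso {V : Type} [Fintype V] {G : SimpleGraph V} (hG : G.Connected)
    (φ : G ≃g G) (m : V) (R : ℝ) (h : V → ℝ) :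
    ∑ n ∈ distBall G (φ m) R, h n = ∑ n ∈ distBall G m R, h (φ n) := by
  symm
  refine Finset.sum_bij (fun n _ => φ n) ?_ ?_ ?_ ?_
  · intro n hn
    rw [mem_distBall] at hn ⊢
    rwa [dist_iso hG]
  · intro a _ b _ hab
    exact φ.injective hab
  · intro b hb
    refine ⟨φ.symm b, ?_, by simp⟩
    rw [mem_distBall] at hb ⊢
    rw [← dist_iso hG φ]
    simpa using hb
  · intros; rfl

theorem card_distBall {V : Type} [Fintype V] {G : SimpleGraph V} (hG : G.Connected)
    (ht : ∀ u v : V, ∃ φ : G ≃g G, φ u = v) (m m' : V) (R : ℝ) :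
    (distBall G m R).card = (distBall G m' R).card := by
  obtain ⟨φ, rfl⟩ := ht m' m
  have := sum_distBall_iso hG φ m' R (fun _ => 1)
  simp only [Finset.sum_const, nsmul_eq_mul, mul_one] at this
  exact_mod_cast this

theorem sum_aut_const {V : Type} {G : SimpleGraph V} [Fintype (G ≃g G)]
    (ht : ∀ u v : V, ∃ φ : G ≃g G, φ u = v) (h : V → ℝ) (u v : V) :
    ∑ φ : G ≃g G, h (φ u) = ∑ φ : G ≃g G, h (φ v) := by
  obtain ⟨ψ, rfl⟩ := ht u v
  exact (Equiv.sum_comp (Equiv.mulRight ψ) (fun φ : G ≃g G => h (φ u))).symm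

/-- Orbit counting: the orbit map `φ ↦ φ u` pushes the uniform measure on the automorphism group
to the uniform measure on the vertices. -/
theorem sum_aut_eq {V : Type} [Fintype V] {G : SimpleGraph V} [Fintype (G ≃g G)]
    (ht : ∀ u v : V, ∃ φ : G ≃g G, φ u = v) (h : V → ℝ) (u : V) :
    (Fintype.card V : ℝ) * ∑ φ : G ≃g G, h (φ u) = (Fintype.card (G ≃g G) : ℝ) * ∑ v, h v := by
  have h1 : ∑ v : V, ∑ φ : G ≃g G, h (φ v) = (Fintype.card V : ℝ) * ∑ φ : G ≃g G, h (φ u) := by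
    rw [Finset.sum_congr rfl (fun v _ => sum_aut_const ht h v u)]
    simp
  rw [← h1, Finset.sum_comm]
  rw [Finset.sum_congr rfl (fun φ _ => Equiv.sum_comp φ.toEquiv h)]
  simp

theorem abs_sub_le_gradAbs {V : Type} [Finite V] {G : SimpleGraph V} (f : V → ℝ) {u v : V}
    (h : G.Adj u v) : |f u - f v| ≤ gradAbs G f u := by
  unfold gradAbs
  rw [finsum_mem_eq_finite_toFinset_sum _ (Set.toFinite _)]
  exact Finset.single_le_sum (f := fun n => |f u - f n|) (fun _ _ => abs_nonneg _) (by simpa using h)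

theorem gradAbs_nonneg {V : Type} (G : SimpleGraph V) (f : V → ℝ) (u : V) :
    0 ≤ gradAbs G f u :=
  finsum_nonneg fun _ => finsum_nonneg fun _ => abs_nonneg _

/-! ### Poincaré inequalities -/

/-- Telescoping along a walk: read as functions of `φ ∈ Aut G`, the pullbacks `φ ↦ f (φ u)` and
`φ ↦ f (φ v)` differ in `ℓ^p(Aut G)` by at most the length of the walk times the norm of the
pulled-back gradient, which by transitivity is the same number `D` at every vertex. -/
theorem walk_bound {V : Type} [Finite V] {G : SimpleGraph V} [Fintype (G ≃g G)]
    (f : V → ℝ) {p : ℝ} (hp : 1 ≤ p) {D : ℝ}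
    (hD : ∀ u, (∑ φ : G ≃g G, gradAbs G f (φ u) ^ p) ^ (1 / p) = D) {u v : V} (q : G.Walk u v) :
    (∑ φ : G ≃g G, |f (φ u) - f (φ v)| ^ p) ^ (1 / p) ≤ q.length * D := by
  have hp0 : 0 < p := by linarith
  induction q with
  | nil => simp [Real.zero_rpow hp0.ne', Real.zero_rpow (inv_pos.2 hp0).ne']
  | @cons a b c hab q ih =>
    have h1 := Real.Lp_add_le Finset.univ (fun φ : G ≃g G => f (φ a) - f (φ b))
      (fun φ => f (φ b) - f (φ c)) hp
    simp only [sub_add_sub_cancel] at h1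
    have h2 : (∑ φ : G ≃g G, |f (φ a) - f (φ b)| ^ p) ^ (1 / p) ≤ D := by
      rw [← hD a]
      refine Real.rpow_le_rpow (Finset.sum_nonneg fun _ _ => by positivity) ?_ (by positivity)
      refine Finset.sum_le_sum fun φ _ => ?_
      exact Real.rpow_le_rpow (abs_nonneg _)
        (abs_sub_le_gradAbs f (φ.map_adj_iff.2 hab)) hp0.le
    rw [SimpleGraph.Walk.length_cons]
    push_cast
    linarith

/-- The `ℓ^p` Poincaré inequality at scale `R`, with constant `R`. -/
theorem poincare {V : Type} [Fintype V] {G : SimpleGraph V} (hG : G.Connected)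
    (ht : ∀ u v : V, ∃ φ : G ≃g G, φ u = v) (f : V → ℝ) {p : ℝ} (hp : 1 ≤ p)
    (m₀ : V) {R : ℝ} (hR : 0 ≤ R) :
    ∑ m, ∑ n ∈ distBall G m R, |f m - f n| ^ p ≤
      ((distBall G m₀ R).card : ℝ) * (R ^ p * ∑ v, gradAbs G f v ^ p) := by
  have hp0 : 0 < p := by linarith
  have : Finite (G ≃g G) := Finite.of_injective (fun φ => (φ : V → V)) DFunLike.coe_injective
  have := Fintype.ofFinite (G ≃g G)
  have hg0 : ∀ u, 0 ≤ gradAbs G f u ^ p := fun u => Real.rpow_nonneg (gradAbs_nonneg G f u) _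
  set S : ℝ := ∑ φ : G ≃g G, gradAbs G f (φ m₀) ^ p with hS
  have hS0 : 0 ≤ S := Finset.sum_nonneg fun _ _ => hg0 _
  have hD : ∀ u, (∑ φ : G ≃g G, gradAbs G f (φ u) ^ p) ^ (1 / p) = S ^ (1 / p) := by
    intro u
    rw [hS, sum_aut_const ht (fun v => gradAbs G f v ^ p) u m₀]
  have h1 : ∀ n ∈ distBall G m₀ R, ∑ φ : G ≃g G, |f (φ m₀) - f (φ n)| ^ p ≤ R ^ p * S := by
    intro n hn
    rw [mem_distBall] at hn
    obtain ⟨q, hq⟩ := hG.exists_walk_length_eq_dist m₀ n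
    have h2 := walk_bound f hp hD q
    rw [hq] at h2
    have h3 : (∑ φ : G ≃g G, |f (φ m₀) - f (φ n)| ^ p) ^ (1 / p) ≤ R * S ^ (1 / p) :=
      h2.trans (mul_le_mul_of_nonneg_right hn.le (by positivity))
    have h0 : 0 ≤ ∑ φ : G ≃g G, |f (φ m₀) - f (φ n)| ^ p :=
      Finset.sum_nonneg fun _ _ => by positivity
    have h4 := Real.rpow_le_rpow (by positivity) h3 hp0.le
    rwa [Real.mul_rpow hR (by positivity), ← Real.rpow_mul h0, ← Real.rpow_mul hS0,
      one_div_mul_cancel hp0.ne', Real.rpow_one, Real.rpow_one] at h4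
  have h5 : ∑ φ : G ≃g G, ∑ n ∈ distBall G (φ m₀) R, |f (φ m₀) - f n| ^ p ≤
      (distBall G m₀ R).card * (R ^ p * S) := by
    rw [Finset.sum_congr rfl (fun φ _ => sum_distBall_iso hG φ m₀ R (fun n => |f (φ m₀) - f n| ^ p)),
      Finset.sum_comm]
    refine (Finset.sum_le_sum h1).trans (by simp)
  have h6 := sum_aut_eq ht (fun m => ∑ n ∈ distBall G m R, |f m - f n| ^ p) m₀
  have h7 := sum_aut_eq ht (fun v => gradAbs G f v ^ p) m₀
  have hA : (0 : ℝ) < Fintype.card (G ≃g G) := by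
    exact_mod_cast Fintype.card_pos_iff.2 ⟨SimpleGraph.Iso.refl⟩
  refine le_of_mul_le_mul_left ?_ hA
  rw [← h6]
  calc _ ≤ (Fintype.card V : ℝ) * ((distBall G m₀ R).card * (R ^ p * S)) := by gcongr
    _ = (distBall G m₀ R).card * (R ^ p * (Fintype.card V * S)) := by ring
    _ = _ := by rw [hS, h7]; ring

/-- At a radius exceeding the diameter, a mean-zero function is controlled by its gradient. -/
theorem poincare_global {V : Type} [Fintype V] {G : SimpleGraph V} (hG : G.Connected)
    (ht : ∀ u v : V, ∃ φ : G ≃g G, φ u = v) (f : V → ℝ) (hf : ∑ m, f m = 0) {p : ℝ} (hp : 1 ≤ p)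
    {R : ℝ} (hR : 0 ≤ R) (hdiam : ∀ u v, (G.dist u v : ℝ) < R) :
    ∑ m, |f m| ^ p ≤ R ^ p * ∑ v, gradAbs G f v ^ p := by
  obtain ⟨m₀⟩ := hG.nonempty
  have hball : ∀ m, distBall G m R = Finset.univ := by
    intro m; ext n; simp [mem_distBall, hdiam]
  have h1 := poincare hG ht f hp m₀ hR
  simp only [hball, Finset.card_univ] at h1
  have hN : (0 : ℝ) < Fintype.card V := by exact_mod_cast Fintype.card_pos_iff.2 ⟨m₀⟩
  -- Jensen: `f m` is the average over `n` of `f m - f n`.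
  have h2 : ∀ m, Fintype.card V * |f m| ^ p ≤ ∑ n, |f m - f n| ^ p := by
    intro m
    have h3 : (Fintype.card V : ℝ) * f m = ∑ n, (f m - f n) := by
      rw [Finset.sum_sub_distrib, hf]; simp
    have h4 : (Fintype.card V : ℝ) * |f m| ≤ ∑ n, |f m - f n| := by
      rw [← abs_of_pos hN, ← abs_mul, h3]
      exact Finset.abs_sum_le_sum_abs _ _
    have h5 := Real.rpow_sum_le_const_mul_sum_rpow Finset.univ (fun n => f m - f n) hp
    have h6 := (Real.rpow_le_rpow (by positivity) h4 (by linarith : 0 ≤ p)).trans h5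
    rw [Real.mul_rpow hN.le (abs_nonneg _), Finset.card_univ] at h6
    refine le_of_mul_le_mul_left ?_ (Real.rpow_pos_of_pos hN (p - 1))
    refine le_trans (le_of_eq ?_) h6
    rw [← mul_assoc, ← Real.rpow_add_one hN.ne']
    simp
  refine le_of_mul_le_mul_left ?_ hN
  rw [Finset.mul_sum]
  exact (Finset.sum_le_sum fun m _ => h2 m).trans h1

/-! ### Doubling and the additive inequality -/

/-- Two disjoint balls of radius `s` whose centres are `⌈2 s⌉` apart fit in a ball of radius `4 s`,
unless the diameter is less than `2 s`. -/
theorem doubling {V : Type} [Fintype V] {G : SimpleGraph V} (hG : G.Connected)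
    (ht : ∀ u v : V, ∃ φ : G ≃g G, φ u = v) {s : ℝ} (hs : 1 ≤ s) {x y : V}
    (hxy : 2 * s ≤ G.dist x y) (m : V) :
    2 * (distBall G m s).card ≤ (distBall G m (4 * s)).card := by
  classical
  obtain ⟨q, hq⟩ := hG.exists_walk_length_eq_dist x y
  set k := ⌈2 * s⌉₊ with hk
  have hk1 : 2 * s ≤ k := Nat.le_ceil _
  have hk2 : (k : ℝ) < 2 * s + 1 := Nat.ceil_lt_add_one (by linarith)
  have hkd : k ≤ G.dist x y := Nat.ceil_le.2 hxy
  set z := q.getVert k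
  have h1 : G.dist x z ≤ k := by
    refine (SimpleGraph.dist_le (q.take k)).trans ?_
    simp [SimpleGraph.Walk.take_length]
  have h2 : G.dist z y ≤ G.dist x y - k := by
    refine (SimpleGraph.dist_le (q.drop k)).trans ?_
    simp [SimpleGraph.Walk.drop_length, hq]
  have h3 : k ≤ G.dist x z := by
    have := hG.dist_triangle (u := x) (v := z) (w := y)
    omega
  have h1' : (G.dist x z : ℝ) ≤ k := by exact_mod_cast h1
  have h3' : (k : ℝ) ≤ G.dist x z := by exact_mod_cast h3
  have tri : ∀ a b c : V, (G.dist a c : ℝ) ≤ G.dist a b + G.dist b c := fun a b c => by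
    exact_mod_cast hG.dist_triangle
  have hdisj : Disjoint (distBall G x s) (distBall G z s) := by
    rw [Finset.disjoint_left]
    intro n hx hz
    rw [mem_distBall] at hx hz
    have := tri x n z
    rw [SimpleGraph.dist_comm (u := n)] at this
    linarith
  have hsub : distBall G x s ∪ distBall G z s ⊆ distBall G x (4 * s) := by
    intro n hn
    rw [Finset.mem_union, mem_distBall, mem_distBall] at hn
    rw [mem_distBall]
    rcases hn with hn | hn
    · linarith
    · have := tri x z n
      linarith
  have := Finset.card_le_card hsub
  rw [Finset.card_union_of_disjoint hdisj, card_distBall hG ht z x] at this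
  rw [card_distBall hG ht m x, card_distBall hG ht m x]
  omega

theorem abs_rpow_split (a b : ℝ) {p : ℝ} (hp : 1 ≤ p) :
    |a| ^ p ≤ 2 ^ (p - 1) * (|a - b| ^ p + |b| ^ p) := by
  have h := Real.rpow_sum_le_const_mul_sum_rpow Finset.univ ![a - b, b] hp
  simp [Fin.sum_univ_two] at h
  refine le_trans (Real.rpow_le_rpow (abs_nonneg _) ?_ (by linarith)) h
  simpa using abs_add_le (a - b) b

/-- If `E` has at most half as many points as an `R`-ball, then `f` on `E` is controlled by its
gradient and its values off `E`: at least half of `B(m, R)` is available for comparison. -/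
theorem core {V : Type} [Fintype V] {G : SimpleGraph V} (hG : G.Connected)
    (ht : ∀ u v : V, ∃ φ : G ≃g G, φ u = v) (f : V → ℝ) {p : ℝ} (hp : 1 ≤ p)
    {R : ℝ} (hR : 0 < R) (E : V → Prop) [DecidablePred E] (m₀ : V)
    (hE : 2 * (Finset.univ.filter E).card ≤ (distBall G m₀ R).card) :
    ∑ m with E m, |f m| ^ p ≤
      2 ^ p * (R ^ p * ∑ v, gradAbs G f v ^ p + ∑ m with ¬ E m, |f m| ^ p) := by
  classical
  have hP := poincare hG ht f hp m₀ hR.le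
  set Γ : ℝ := ((distBall G m₀ R).card : ℝ) with hΓ
  have hcard : ∀ m, ((distBall G m R).card : ℝ) = Γ := fun m => by
    rw [hΓ, card_distBall hG ht m m₀]
  have hΓ0 : 0 < Γ := by
    rw [hΓ]
    exact_mod_cast Finset.card_pos.2 ⟨m₀, by rw [mem_distBall]; simpa using hR⟩
  have h1 : ∀ m, Γ * |f m| ^ p ≤
      2 ^ p * ∑ n ∈ distBall G m R, (|f m - f n| ^ p + if E n then 0 else |f n| ^ p) := by
    intro m
    have hc : Γ ≤ 2 * (((distBall G m R).filter (fun n => ¬ E n)).card : ℝ) := by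
      have a1 := Finset.card_filter_add_card_filter_not (s := distBall G m R) E
      have a2 : ((distBall G m R).filter E).card ≤ (Finset.univ.filter E).card :=
        Finset.card_le_card (Finset.filter_subset_filter _ (Finset.subset_univ _))
      have a3 := card_distBall hG ht m m₀ R
      rw [hΓ]
      norm_cast
      omega
    have hpow : (2 : ℝ) ^ p = 2 * 2 ^ (p - 1) := by
      rw [Real.rpow_sub_one (by norm_num)]; ring
    calc Γ * |f m| ^ p
        ≤ 2 * (((distBall G m R).filter (fun n => ¬ E n)).card : ℝ) * |f m| ^ p := by gcongr
      _ = 2 * ∑ n ∈ distBall G m R with ¬ E n, |f m| ^ p := by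
          rw [Finset.sum_const, nsmul_eq_mul]; ring
      _ ≤ 2 * ∑ n ∈ distBall G m R with ¬ E n, 2 ^ (p - 1) * (|f m - f n| ^ p + |f n| ^ p) := by
          gcongr with n hn
          exact abs_rpow_split _ _ hp
      _ = 2 ^ p * ∑ n ∈ distBall G m R with ¬ E n,
            (|f m - f n| ^ p + if E n then 0 else |f n| ^ p) := by
          rw [← Finset.mul_sum, hpow, ← mul_assoc]
          congr 1
          refine Finset.sum_congr rfl fun n hn => ?_
          rw [if_neg (Finset.mem_filter.1 hn).2]
      _ ≤ _ := by
          refine mul_le_mul_of_nonneg_left ?_ (by positivity)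
          refine Finset.sum_le_sum_of_subset_of_nonneg (Finset.filter_subset _ _) fun n _ _ => ?_
          split_ifs <;> positivity
  -- Symmetry of the distance turns the double sum of `|f n| ^ p` into `Γ` copies of a single sum.
  have h2 : ∑ m, ∑ n ∈ distBall G m R, (if E n then 0 else |f n| ^ p) =
      Γ * ∑ m with ¬ E m, |f m| ^ p := by
    have hcomm : ∑ m, ∑ n ∈ distBall G m R, (if E n then 0 else |f n| ^ p) =
        ∑ n, ∑ m ∈ distBall G n R, (if E n then 0 else |f n| ^ p) := by
      refine Finset.sum_comm' fun m n => ?_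
      simp [mem_distBall, SimpleGraph.dist_comm (u := m)]
    rw [hcomm, Finset.mul_sum, Finset.sum_filter]
    refine Finset.sum_congr rfl fun n _ => ?_
    rw [Finset.sum_const, nsmul_eq_mul, hcard]
    by_cases h : E n
    · simp [h]
    · simp [h]
  refine le_of_mul_le_mul_left ?_ hΓ0
  calc Γ * ∑ m with E m, |f m| ^ p ≤ ∑ m, Γ * |f m| ^ p := by
        rw [← Finset.mul_sum]
        refine mul_le_mul_of_nonneg_left ?_ hΓ0.le
        exact Finset.sum_le_sum_of_subset_of_nonneg (Finset.filter_subset _ _)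
          fun n _ _ => by positivity
    _ ≤ ∑ m, 2 ^ p * ∑ n ∈ distBall G m R, (|f m - f n| ^ p + if E n then 0 else |f n| ^ p) :=
        Finset.sum_le_sum fun m _ => h1 m
    _ = 2 ^ p * (∑ m, ∑ n ∈ distBall G m R, |f m - f n| ^ p +
          Γ * ∑ m with ¬ E m, |f m| ^ p) := by
        rw [← Finset.mul_sum, ← h2]
        simp only [Finset.sum_add_distrib]
    _ ≤ 2 ^ p * (Γ * (R ^ p * ∑ v, gradAbs G f v ^ p) + Γ * ∑ m with ¬ E m, |f m| ^ p) := by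
        gcongr
    _ = _ := by ring

theorem lpN_eq {V : Type} [Fintype V] (p : ℝ) (f : V → ℝ) :
    lpN p f = (∑ m, |f m| ^ p) ^ (1 / p) := by
  rw [lpN, finsum_eq_sum_of_fintype]

theorem lpN_nonneg {V : Type} (p : ℝ) (f : V → ℝ) : 0 ≤ lpN p f :=
  Real.rpow_nonneg (finsum_nonneg fun _ => by positivity) _

theorem lpN_rpow {V : Type} [Fintype V] {p : ℝ} (hp : 1 ≤ p) (f : V → ℝ) :
    lpN p f ^ p = ∑ m, |f m| ^ p := by
  rw [lpN_eq, ← Real.rpow_mul (Finset.sum_nonneg fun _ _ => by positivity),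
    one_div_mul_cancel (by linarith), Real.rpow_one]

/-- The scale-`s` additive form of the uncertainty inequality. -/
theorem additive_bound {V : Type} [Fintype V] {G : SimpleGraph V} (hG : G.Connected)
    (ht : ∀ u v : V, ∃ φ : G ≃g G, φ u = v) (w : V → ℝ)
    (hw : ∀ r : ℝ, 1 ≤ r → ∀ m₀ : V,
      {m | w m ≤ r}.encard ≤ {n | (G.dist m₀ n : ℝ) < r}.encard)
    (f : V → ℝ) (hf : ∑ m, f m = 0) {p : ℝ} (hp : 1 ≤ p) {α : ℝ} (hα : 0 < α)
    {s : ℝ} (hs : 1 ≤ s) :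
    lpN p f ≤ 8 * s * lpN p (gradAbs G f) +
      4 * (s ^ (-α) * lpN p (fun m => w m ^ α * f m)) := by
  classical
  have hp0 : 0 < p := by linarith
  have hs0 : 0 < s := by linarith
  set A := lpN p (gradAbs G f) with hA
  set B := lpN p (fun m => w m ^ α * f m) with hB
  have hA0 : 0 ≤ A := lpN_nonneg _ _
  have hB0 : 0 ≤ B := lpN_nonneg _ _
  have hAp : A ^ p = ∑ v, gradAbs G f v ^ p := by
    rw [hA, lpN_rpow hp]
    exact Finset.sum_congr rfl fun v _ => by rw [abs_of_nonneg (gradAbs_nonneg G f v)]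
  have hBp : B ^ p = ∑ m, |w m ^ α * f m| ^ p := by rw [hB, lpN_rpow hp]
  have hsa : 0 < s ^ (-α) := Real.rpow_pos_of_pos hs0 _
  refine (Real.rpow_le_rpow_iff (lpN_nonneg _ _) (by positivity) hp0).1 ?_
  rw [lpN_rpow hp]
  by_cases hd : ∀ u v, (G.dist u v : ℝ) < 2 * s
  · refine (poincare_global hG ht f hf hp (by linarith) hd).trans ?_
    rw [← hAp, ← Real.mul_rpow (by positivity) hA0]
    refine Real.rpow_le_rpow (by positivity) ?_ hp0.le
    nlinarith [mul_nonneg hs0.le hA0, mul_nonneg hsa.le hB0]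
  · push Not at hd
    obtain ⟨x, y, hxy⟩ := hd
    have hdb := doubling hG ht hs hxy x
    have hwc : (Finset.univ.filter (fun m => w m ≤ s)).card ≤ (distBall G x s).card := by
      have h := hw s hs x
      have e1 : {m | w m ≤ s} = ((Finset.univ.filter (fun m => w m ≤ s) : Finset V) : Set V) := by
        ext; simp
      have e2 : {n | (G.dist x n : ℝ) < s} = ((distBall G x s : Finset V) : Set V) := by
        ext; simp [mem_distBall]
      rw [e1, e2, Set.encard_coe_eq_coe_finsetCard, Set.encard_coe_eq_coe_finsetCard] at h
      exact_mod_cast h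
    have hc := core hG ht f hp (R := 4 * s) (by linarith) (fun m => w m ≤ s) x (by omega)
    have hT : ∑ m with ¬ (w m ≤ s), |f m| ^ p ≤ (s ^ (-α) * B) ^ p := by
      rw [Real.mul_rpow hsa.le hB0, hBp, Finset.mul_sum]
      refine (Finset.sum_le_sum fun m hm => ?_).trans
        (Finset.sum_le_sum_of_subset_of_nonneg (Finset.filter_subset _ _)
          fun n _ _ => by positivity)
      have hm' : s < w m := not_le.1 (Finset.mem_filter.1 hm).2
      rw [← Real.mul_rpow hsa.le (abs_nonneg _)]
      refine Real.rpow_le_rpow (abs_nonneg _) ?_ hp0.le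
      rw [abs_mul, abs_of_nonneg (Real.rpow_nonneg (by linarith) _), ← mul_assoc]
      refine le_mul_of_one_le_left (abs_nonneg _) ?_
      rw [Real.rpow_neg hs0.le, ← div_eq_inv_mul, one_le_div (Real.rpow_pos_of_pos hs0 _)]
      exact Real.rpow_le_rpow hs0.le hm'.le hα.le
    have hsplit := Finset.sum_filter_add_sum_filter_not Finset.univ (fun m => w m ≤ s)
      (fun m => |f m| ^ p)
    rw [← hAp] at hc
    have h21 : (2 : ℝ) ^ p + 1 ≤ 4 ^ p := by
      have e : (4 : ℝ) ^ p = 2 ^ p * 2 ^ p := by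
        rw [← Real.mul_rpow (by norm_num) (by norm_num)]; norm_num
      have : (2 : ℝ) ≤ 2 ^ p := by
        simpa using Real.rpow_le_rpow_of_exponent_le (by norm_num : (1 : ℝ) ≤ 2) hp
      nlinarith
    have hT0 : 0 ≤ (s ^ (-α) * B) ^ p := by positivity
    calc ∑ m, |f m| ^ p ≤ 2 ^ p * ((4 * s) ^ p * A ^ p) + (2 ^ p + 1) * (s ^ (-α) * B) ^ p := by
          have := mul_le_mul_of_nonneg_left hT (by positivity : (0 : ℝ) ≤ 2 ^ p)
          linarith
      _ ≤ 2 ^ p * ((4 * s) ^ p * A ^ p) + 4 ^ p * (s ^ (-α) * B) ^ p := by gcongr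
      _ = (8 * s * A) ^ p + (4 * (s ^ (-α) * B)) ^ p := by
          rw [← Real.mul_rpow (by positivity) hA0, ← Real.mul_rpow (by norm_num) (by positivity),
            ← Real.mul_rpow (by norm_num) (by positivity)]
          ring_nf
      _ ≤ _ := by
          have := NNReal.add_rpow_le_rpow_add ⟨8 * s * A, by positivity⟩
            ⟨4 * (s ^ (-α) * B), by positivity⟩ hp
          exact_mod_cast this

/-! ### The multiplicative inequality -/

/-- Discrete `ℓ^p` uncertainty inequality on finite vertex-transitive graphs:
there is a universal constant `C > 0` such that for every connected, locally finite,
vertex-transitive graph with finite vertex set, every weight `w : V → [1,∞)` whose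
sublevel sets `{w ≤ r}` have cardinality at most that of a ball of radius `r`,
every `f : V → ℝ` with `∑_m f(m) = 0`, every `1 ≤ p < ∞` and every `α > 0`:
`‖f‖_{ℓ^p} ≤ C p^{α/(α+1)} ‖∇f‖_{ℓ^p}^{α/(α+1)} ‖w^α f‖_{ℓ^p}^{1/(α+1)}`. -/
theorem discrete_uncertainty_finite :
    ∃ C : ℝ, 0 < C ∧
      ∀ (V : Type) (G : SimpleGraph V), Countable V → G.Connected →
        (∀ v : V, (G.neighborSet v).Finite) →
        (∀ u v : V, ∃ φ : G ≃g G, φ u = v) →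
        Finite V →
        ∀ w : V → ℝ, (∀ m, 1 ≤ w m) →
        (∀ r : ℝ, 1 ≤ r → ∀ m₀ : V,
          {m | w m ≤ r}.encard ≤ {n | (G.dist m₀ n : ℝ) < r}.encard) →
        ∀ f : V → ℝ, (∑ᶠ m, f m) = 0 →
        ∀ p : ℝ, 1 ≤ p → ∀ α : ℝ, 0 < α →
          lpN p f ≤ C * p ^ (α / (α + 1)) *
            lpN p (gradAbs G f) ^ (α / (α + 1)) *
            lpN p (fun m => w m ^ α * f m) ^ (1 / (α + 1)) := by
  classical
  refine ⟨12, by norm_num, ?_⟩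
  intro V G _ hG _ ht hV w hw1 hw f hf p hp α hα
  have := Fintype.ofFinite V
  have hp0 : 0 < p := by linarith
  rw [finsum_eq_sum_of_fintype] at hf
  have hadd := fun s (hs : (1 : ℝ) ≤ s) => additive_bound hG ht w hw f hf hp hα hs
  have hle : lpN p f ≤ lpN p (fun m => w m ^ α * f m) := by
    rw [lpN_eq, lpN_eq]
    refine Real.rpow_le_rpow (Finset.sum_nonneg fun _ _ => by positivity) ?_ (by positivity)
    refine Finset.sum_le_sum fun m _ => Real.rpow_le_rpow (abs_nonneg _) ?_ hp0.le
    rw [abs_mul]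
    exact le_mul_of_one_le_left (abs_nonneg _)
      ((Real.one_le_rpow (hw1 m) hα.le).trans (le_abs_self _))
  have hA0 : 0 ≤ lpN p (gradAbs G f) := lpN_nonneg _ _
  have hB0 : 0 ≤ lpN p (fun m => w m ^ α * f m) := lpN_nonneg _ _
  have hglob : lpN p (gradAbs G f) = 0 → lpN p f ≤ 0 := by
    intro hA
    obtain ⟨M, hM⟩ := (Set.finite_range (fun x : V × V => G.dist x.1 x.2)).bddAbove
    have h1 := poincare_global hG ht f hf hp (R := (M : ℝ) + 1) (by positivity) (fun u v => by
      have : G.dist u v ≤ M := hM ⟨(u, v), rfl⟩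
      exact_mod_cast Nat.lt_succ_of_le this)
    have h2 : ∑ v, gradAbs G f v ^ p = 0 := by
      have := lpN_rpow hp (gradAbs G f)
      rw [hA, Real.zero_rpow hp0.ne'] at this
      rw [this]
      exact Finset.sum_congr rfl fun v _ => by rw [abs_of_nonneg (gradAbs_nonneg G f v)]
    rw [h2, mul_zero, ← lpN_rpow hp] at h1
    by_contra hpos
    exact absurd h1 (not_le.2 (Real.rpow_pos_of_pos (not_le.1 hpos) p))
  generalize lpN p (gradAbs G f) = A at *
  generalize lpN p (fun m => w m ^ α * f m) = B at *
  generalize lpN p f = N at *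
  set a := α / (α + 1) with ha
  set b := 1 / (α + 1) with hb
  have hα1 : 0 < α + 1 := by linarith
  have ha0 : 0 < a := by positivity
  have hb0 : 0 < b := by positivity
  have hab : a + b = 1 := by rw [ha, hb]; field_simp
  have hpa : 1 ≤ p ^ a := Real.one_le_rpow hp ha0.le
  have hAB : 0 ≤ A ^ a * B ^ b := by positivity
  suffices h : N ≤ 12 * (A ^ a * B ^ b) by
    calc N ≤ 12 * (A ^ a * B ^ b) := h
      _ ≤ p ^ a * (12 * (A ^ a * B ^ b)) := le_mul_of_one_le_left (by positivity) hpa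
      _ = _ := by ring
  rcases le_total B A with hBA | hBA
  · have h1 : B ^ a * B ^ b = B := by
      rw [← Real.rpow_add' hB0 (by rw [hab]; norm_num), hab, Real.rpow_one]
    have h2 : B ^ a * B ^ b ≤ A ^ a * B ^ b := by gcongr
    linarith
  · rcases hA0.eq_or_lt with hA | hA
    · exact (hglob hA.symm).trans (by positivity)
    · have hB : 0 < B := by linarith
      -- The scale at which the two terms `s A` and `s ^ (-α) B` balance.
      have h1 := hadd ((B / A) ^ b) (Real.one_le_rpow ((one_le_div hA).2 hBA) hb0.le)
      have e1 : (B / A) ^ b * A = A ^ a * B ^ b := by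
        have hAA : A = A ^ a * A ^ b := by rw [← Real.rpow_add hA, hab, Real.rpow_one]
        have : A ^ b ≠ 0 := by positivity
        rw [Real.div_rpow hB0 hA0]
        nth_rewrite 2 [hAA]
        field_simp
      have e2 : ((B / A) ^ b) ^ (-α) * B = A ^ a * B ^ b := by
        have hBB : B = B ^ a * B ^ b := by rw [← Real.rpow_add hB, hab, Real.rpow_one]
        have hba : b * -α = -a := by rw [ha, hb]; ring
        have : B ^ a ≠ 0 := by positivity
        rw [← Real.rpow_mul (by positivity), hba, Real.rpow_neg (by positivity),
          Real.div_rpow hB0 hA0]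
        nth_rewrite 2 [hBB]
        field_simp
      rw [e2, mul_assoc, e1] at h1
      linarith
end

section
/- Suppose V is infinite. If E ⊆ V is a set with |E| ≤ Γ(r) for some real r ≥ 1, then |E| ≤ 2 · r · ‖∂E‖, where ‖∂E‖ is the edge-perimeter of E. -/
/-! The inequality says `|E| ≤ 4 r |∂E|`, where `∂E` is the set of edges leaving `E`
(`edgePerim_eq`: the perimeter counts each of them twice).

Fix a finite ball `F` around a vertex `o` and consider the placements of `F`, that is, the maps
`F → V` which extend to automorphisms. For `x ∈ F` the number `fixOne G F x` of placements sending
`x` to a prescribed vertex does not depend on that vertex, by transitivity. There are two cases.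

* Suppose `fixOne` differs at two adjacent vertices `x`, `y` of `F` (this is non-unimodularity).
  Both values are multiples of the number `fixTwo G F x y` of placements fixing `x` and `y`, so
  one exceeds the other by at least that number. Counting the placements that send `x`, respectively
  `y`, into `E` then gives `|E| ≤ |∂E|` (`fixOne_le_of_adj`).
* Otherwise `fixOne` is a constant `N` on `F`. A placement `q` with `q o ∈ E` and `q x ∉ E` leaves
  `E` at one of the steps of the image of a geodesic from `o` to `x`, and each step accounts for at
  most `N |∂E|` placements (`transport`). Summing over `x ∈ F` gives
  `|E| (|F| - |E|) ≤ (∑ x ∈ F, d(o, x)) |∂E|` (`ball_average`).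

Let `n` be the largest integer less than `r` and let `F` be the closed ball of radius `2 n + 1`
around a point `o` of a long geodesic, which exists since `V` is infinite. Then `F` contains two
disjoint balls of radius `n` (`exists_two_balls`), so `|F| ≥ 2 |E|`; and at least `|E|` points of
`F` are within `n` of `o`. Together these give `∑ d(o, x) ≤ (3 n + 1) (|F| - |E|)`, whence
`|E| ≤ (3 n + 1) |∂E| ≤ 4 r |∂E|`. -/

open scoped BigOperators

/-- The edge-perimeter `‖∂A‖ = ∑_{m ∈ V} |∇1_A|(m)` of a set of vertices. -/
noncomputable def edgePerim {V : Type} (G : SimpleGraph V) (A : Set V) : ℝ :=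
  ∑ᶠ m, gradAbs G (A.indicator (fun _ => (1 : ℝ))) m

/-! ### Counting by fibres -/

section Counting

lemma ncard_eq_mul_of_fibers {α β : Type*} {S : Set α} {T : Set β} (f : α → β) (c : ℕ)
    (hT : T.Finite) (hmaps : ∀ a ∈ S, f a ∈ T)
    (hfin : ∀ t ∈ T, {a | a ∈ S ∧ f a = t}.Finite)
    (hcard : ∀ t ∈ T, {a | a ∈ S ∧ f a = t}.ncard = c) :
    S.Finite ∧ S.ncard = c * T.ncard := by
  classical
  have hS : S.Finite := by
    refine (hT.biUnion hfin).subset fun a ha => ?_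
    simp only [Set.mem_iUnion]
    exact ⟨f a, hmaps a ha, ha, rfl⟩
  refine ⟨hS, ?_⟩
  rw [Set.ncard_eq_toFinset_card S hS, Set.ncard_eq_toFinset_card T hT,
    Finset.card_eq_sum_card_fiberwise (f := f) (t := hT.toFinset)
      (by intro a ha; simpa using hmaps a (by simpa using ha)),
    Finset.sum_const_nat (m := c), mul_comm]
  intro t ht
  rw [← hcard t (by simpa using ht), ← Set.ncard_coe_finset]
  congr 1
  ext a
  simp

lemma ncard_le_mul_of_fibers {α β : Type*} {S : Set α} {T : Set β} (f : α → β) (c : ℕ)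
    (hT : T.Finite) (hmaps : ∀ a ∈ S, f a ∈ T)
    (hfin : S.Finite)
    (hcard : ∀ t ∈ T, {a | a ∈ S ∧ f a = t}.ncard ≤ c) :
    S.ncard ≤ c * T.ncard := by
  classical
  rw [Set.ncard_eq_toFinset_card S hfin, Set.ncard_eq_toFinset_card T hT]
  refine Finset.card_le_mul_card_image_of_maps_to (f := f)
    (by intro a ha; simpa using hmaps a (by simpa using ha)) c ?_
  intro t ht
  refine le_trans (le_of_eq ?_) (hcard t (by simpa using ht))
  rw [← Set.ncard_coe_finset]
  congr 1
  ext a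
  simp

end Counting

/-! ### Distances and balls -/

section Geometry

variable {V : Type} {G : SimpleGraph V}

lemma exists_dist_split (hconn : G.Connected) (u v : V) (k : ℕ)
    (hk : k ≤ G.dist u v) : ∃ w, G.dist u w = k ∧ k + G.dist w v = G.dist u v := by
  obtain ⟨p, hp⟩ := hconn.exists_walk_length_eq_dist u v
  have h1 := SimpleGraph.dist_le (p.take k)
  have h2 := SimpleGraph.dist_le (p.drop k)
  have h3 := hconn.dist_triangle (u := u) (v := p.getVert k) (w := v)
  rw [SimpleGraph.Walk.take_length] at h1
  rw [SimpleGraph.Walk.drop_length] at h2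
  refine ⟨p.getVert k, ?_, ?_⟩ <;> omega

lemma finite_closedBall (hconn : G.Connected) (hfin : ∀ v : V, (G.neighborSet v).Finite)
    (o : V) (k : ℕ) : {x | G.dist o x ≤ k}.Finite := by
  induction k with
  | zero =>
    refine (Set.finite_singleton o).subset fun x hx => ?_
    have h0 : G.dist o x = 0 := by simpa using hx
    exact ((hconn.dist_eq_zero_iff).1 h0).symm
  | succ k ih =>
    refine (ih.union (ih.biUnion fun y _ => hfin y)).subset fun x hx => ?_
    by_cases h : G.dist o x ≤ k
    · exact Or.inl h
    · right
      have hx' : G.dist o x = k + 1 := by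
        have : G.dist o x ≤ k + 1 := hx
        omega
      obtain ⟨y, hy, hyx⟩ := exists_dist_split hconn o x k (by omega)
      have : G.dist y x = 1 := by omega
      simp only [Set.mem_iUnion]
      exact ⟨y, hy.le, SimpleGraph.dist_eq_one_iff_adj.1 this⟩

lemma exists_two_balls (hconn : G.Connected) (hfin : ∀ v : V, (G.neighborSet v).Finite)
    (hinf : Infinite V) (n : ℕ) :
    ∃ o c₁ c₂ : V, Disjoint {x | G.dist c₁ x ≤ n} {x | G.dist c₂ x ≤ n} ∧
      {x | G.dist c₁ x ≤ n} ∪ {x | G.dist c₂ x ≤ n} ⊆ {x | G.dist o x ≤ 2 * n + 1} := by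
  obtain ⟨c₁⟩ := hconn.nonempty
  obtain ⟨z, hz⟩ := (finite_closedBall hconn hfin c₁ (2 * n)).exists_notMem
  have hz : 2 * n < G.dist c₁ z := by simpa using hz
  obtain ⟨o, ho, hoz⟩ := exists_dist_split hconn c₁ z n (by omega)
  obtain ⟨c₂, hc, hcz⟩ := exists_dist_split hconn o z (n + 1) (by omega)
  have h12 := hconn.dist_triangle (u := c₁) (v := c₂) (w := z)
  refine ⟨o, c₁, c₂, ?_, ?_⟩
  · rw [Set.disjoint_left]
    intro x hx hx'
    have h1 : G.dist c₁ x ≤ n := hx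
    have h2 : G.dist c₂ x ≤ n := hx'
    have h3 := hconn.dist_triangle (u := c₁) (v := x) (w := c₂)
    rw [G.dist_comm (u := x)] at h3
    omega
  · rintro x (hx | hx)
    · have h1 : G.dist c₁ x ≤ n := hx
      have h3 := hconn.dist_triangle (u := o) (v := c₁) (w := x)
      rw [G.dist_comm (u := o) (v := c₁)] at h3
      change G.dist o x ≤ _
      omega
    · have h1 : G.dist c₂ x ≤ n := hx
      have h3 := hconn.dist_triangle (u := o) (v := c₂) (w := x)
      change G.dist o x ≤ _
      omega

end Geometry

/-! ### The edge boundary -/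

section Boundary

variable {V : Type} (G : SimpleGraph V)

/-- The edges leaving `E`, oriented outwards. Each boundary edge occurs once, so the
edge-perimeter is twice the cardinality. -/
def outEdges (E : Set V) : Set (V × V) := {p | G.Adj p.1 p.2 ∧ p.1 ∈ E ∧ p.2 ∉ E}

variable {G}

lemma outEdges_finite (hfin : ∀ v : V, (G.neighborSet v).Finite) {E : Set V} (hE : E.Finite) :
    (outEdges G E).Finite := by
  refine (hE.biUnion fun u _ => (hfin u).image (Prod.mk u)).subset ?_
  rintro ⟨u, v⟩ ⟨h, hu, _⟩
  simp only [Set.mem_iUnion]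
  exact ⟨u, hu, v, h, rfl⟩

lemma edgePerim_eq (hfin : ∀ v : V, (G.neighborSet v).Finite) {E : Set V} (hE : E.Finite) :
    edgePerim G E = 2 * ((outEdges G E).ncard : ℝ) := by
  classical
  set W : Finset V := (hE.union (hE.biUnion fun u _ => hfin u)).toFinset with hW
  have hEW : ∀ u ∈ E, u ∈ W := fun u hu => by simp [hW, hu]
  have hNW : ∀ u v, u ∈ E → G.Adj u v → v ∈ W := fun u v hu h => by
    simp only [hW, Set.Finite.mem_toFinset, Set.mem_union, Set.mem_iUnion]
    exact Or.inr ⟨u, hu, h⟩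
  have hgrad : ∀ m, gradAbs G (E.indicator (fun _ => (1 : ℝ))) m =
      ∑ n ∈ (hfin m).toFinset, ((if m ∈ E ∧ n ∉ E then 1 else 0) +
        (if n ∈ E ∧ m ∉ E then (1 : ℝ) else 0)) := by
    intro m
    rw [gradAbs, finsum_mem_eq_finite_toFinset_sum _ (hfin m)]
    refine Finset.sum_congr rfl fun n _ => ?_
    by_cases hm : m ∈ E <;> by_cases hn : n ∈ E <;> simp [hm, hn]
  have hsupp : Function.support (gradAbs G (E.indicator (fun _ => (1 : ℝ)))) ⊆ W := by
    intro m hm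
    by_contra hmW
    apply hm
    rw [hgrad]
    refine Finset.sum_eq_zero fun n hn => ?_
    have hn : G.Adj m n := by simpa using hn
    have h1 : m ∉ E := fun h => hmW (hEW m h)
    have h2 : n ∉ E := fun h => hmW (hNW n m h hn.symm)
    simp [h1, h2]
  rw [edgePerim, finsum_eq_sum_of_support_subset _ hsupp]
  simp only [hgrad, Finset.sum_add_distrib]
  have key : (outEdges G E) = ((W.sigma fun m => (hfin m).toFinset).filter
      (fun p => p.1 ∈ E ∧ p.2 ∉ E)).image (fun p => (p.1, p.2)) := by
    ext ⟨u, v⟩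
    simp only [outEdges, Set.mem_ofPred_eq, Finset.coe_image, Set.mem_image, Finset.mem_coe,
      Finset.mem_filter, Finset.mem_sigma, Set.Finite.mem_toFinset, Prod.mk.injEq,
      SimpleGraph.mem_neighborSet]
    constructor
    · rintro ⟨h, hu, hv⟩
      exact ⟨⟨u, v⟩, ⟨⟨hEW u hu, h⟩, hu, hv⟩, rfl, rfl⟩
    · rintro ⟨⟨a, b⟩, ⟨⟨_, h⟩, hu, hv⟩, rfl, rfl⟩
      exact ⟨h, hu, hv⟩
  have key' : (Prod.swap '' outEdges G E) = ((W.sigma fun m => (hfin m).toFinset).filter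
      (fun p => p.2 ∈ E ∧ p.1 ∉ E)).image (fun p => (p.1, p.2)) := by
    ext ⟨u, v⟩
    simp only [outEdges, Set.mem_ofPred_eq, Finset.coe_image, Set.mem_image, Finset.mem_coe,
      Finset.mem_filter, Finset.mem_sigma, Set.Finite.mem_toFinset, Prod.mk.injEq,
      SimpleGraph.mem_neighborSet]
    constructor
    · rintro ⟨⟨a, b⟩, ⟨h, hu, hv⟩, heq⟩
      simp only [Prod.swap_prod_mk, Prod.mk.injEq] at heq
      obtain ⟨rfl, rfl⟩ := heq
      exact ⟨⟨b, a⟩, ⟨⟨hNW a b hu h, h.symm⟩, hu, hv⟩, rfl, rfl⟩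
    · rintro ⟨⟨a, b⟩, ⟨⟨_, h⟩, hu, hv⟩, rfl, rfl⟩
      exact ⟨(b, a), ⟨h.symm, hu, hv⟩, rfl⟩
  have hinj : Function.Injective (fun p : (_ : V) × V => (p.1, p.2)) := by
    rintro ⟨a, b⟩ ⟨c, d⟩ h
    simp only [Prod.mk.injEq] at h
    obtain ⟨rfl, rfl⟩ := h
    rfl
  have c1 := congrArg Set.ncard key
  have c2 := congrArg Set.ncard key'
  rw [Set.ncard_coe_finset, Finset.card_image_of_injective _ hinj] at c1 c2
  rw [Set.ncard_image_of_injective _ Prod.swap_injective] at c2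
  rw [two_mul]
  congr 1
  · rw [c1, Finset.card_filter, Finset.sum_sigma]
    push_cast
    rfl
  · rw [c2, Finset.card_filter, Finset.sum_sigma]
    push_cast
    rfl

end Boundary

/-! ### Placements of a finite piece of the graph -/

section Placements

variable {V : Type} (G : SimpleGraph V) (F : Finset V)

/-- The placements of the finite piece `F`: all maps `F → V` that extend to an automorphism of
`G`. They stand for the cosets of the pointwise stabiliser of `F`, with the counting measure
playing the role of Haar measure on the automorphism group. -/
def placements : Set (F → V) := Set.range fun (φ : G ≃g G) (x : F) => φ x

/-- The number of placements of `F` fixing `x`, i.e. the index of the pointwise stabiliser of `F`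
in the stabiliser of `x`. -/
noncomputable def fixOne (x : F) : ℕ := {q | q ∈ placements G F ∧ q x = x}.ncard

/-- The number of placements of `F` fixing both `x` and `y`. -/
noncomputable def fixTwo (x y : F) : ℕ :=
  {q | q ∈ placements G F ∧ q x = x ∧ q y = y}.ncard

variable {G F}

lemma dist_iso_s3 (φ : G ≃g G) (hconn : G.Connected) (x y : V) : G.dist (φ x) (φ y) = G.dist x y := by
  have key : ∀ (ψ : G ≃g G) (a b : V), G.dist (ψ a) (ψ b) ≤ G.dist a b := by
    intro ψ a b
    obtain ⟨p, hp⟩ := hconn.exists_walk_length_eq_dist a b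
    rw [← hp, ← SimpleGraph.Walk.length_map (ψ : G →g G) p]
    exact SimpleGraph.dist_le _
  refine le_antisymm (key φ x y) ?_
  simpa using key φ.symm (φ x) (φ y)

lemma comp_mem {q : F → V} (hq : q ∈ placements G F) (ψ : G ≃g G) :
    (fun x => ψ (q x)) ∈ placements G F := by
  obtain ⟨φ, rfl⟩ := hq
  exact ⟨φ.trans ψ, rfl⟩

lemma comp_inj (ψ : G ≃g G) : Function.Injective fun (q : F → V) (x : F) => ψ (q x) := by
  intro q q' h
  funext x
  exact ψ.injective (congrFun h x)

lemma fiber_finite (hconn : G.Connected) (hfin : ∀ v : V, (G.neighborSet v).Finite)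
    (x : F) (m : V) : {q | q ∈ placements G F ∧ q x = m}.Finite := by
  refine (Set.Finite.pi' fun y : F =>
    finite_closedBall hconn hfin m (G.dist (x : V) (y : V))).subset ?_
  rintro q ⟨⟨φ, rfl⟩, hm⟩ y
  change G.dist m (φ y) ≤ _
  rw [← hm]
  exact (dist_iso_s3 φ hconn _ _).le

lemma fiber_card (htrans : ∀ u v : V, ∃ φ : G ≃g G, φ u = v) (x : F) (m : V) :
    {q | q ∈ placements G F ∧ q x = m}.ncard = fixOne G F x := by
  obtain ⟨ψ, hψ⟩ := htrans x m
  rw [fixOne, ← Set.ncard_image_of_injective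
    {q | q ∈ placements G F ∧ q x = (x : V)} (comp_inj ψ)]
  congr 1
  ext q
  constructor
  · rintro ⟨hq, hm⟩
    refine ⟨fun y => ψ.symm (q y), ⟨comp_mem hq ψ.symm, ?_⟩, ?_⟩
    · simp [hm, ← hψ]
    · simp
  · rintro ⟨q', ⟨hq, hm⟩, rfl⟩
    exact ⟨comp_mem hq ψ, by simp [hm, hψ]⟩

lemma fiberTwo_card {x y : F} {q₀ : F → V} (hq₀ : q₀ ∈ placements G F) :
    {q | q ∈ placements G F ∧ q x = q₀ x ∧ q y = q₀ y}.ncard = fixTwo G F x y := by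
  obtain ⟨ψ, rfl⟩ := hq₀
  rw [fixTwo, ← Set.ncard_image_of_injective
    {q | q ∈ placements G F ∧ q x = (x : V) ∧ q y = (y : V)} (comp_inj ψ)]
  congr 1
  ext q
  constructor
  · rintro ⟨hq, hx, hy⟩
    refine ⟨fun y => ψ.symm (q y), ⟨comp_mem hq ψ.symm, ?_, ?_⟩, ?_⟩
    · simp [hx]
    · simp [hy]
    · simp
  · rintro ⟨q', ⟨hq, hx, hy⟩, rfl⟩
    exact ⟨comp_mem hq ψ, by simp [hx], by simp [hy]⟩

lemma id_mem : (fun x : F => (x : V)) ∈ placements G F := ⟨SimpleGraph.Iso.refl, rfl⟩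

lemma fixTwo_comm (x y : F) : fixTwo G F x y = fixTwo G F y x := by
  unfold fixTwo
  congr 1
  ext q
  simp only [Set.mem_ofPred_eq]
  tauto

variable (hconn : G.Connected) (hfin : ∀ v : V, (G.neighborSet v).Finite)
include hconn hfin

lemma fixTwo_pos (x y : F) : 0 < fixTwo G F x y := by
  rw [fixTwo, Set.ncard_pos ((fiber_finite hconn hfin x x).subset fun q hq => ⟨hq.1, hq.2.1⟩)]
  exact ⟨_, id_mem, rfl, rfl⟩

lemma fixTwo_le_fixOne (x y : F) : fixTwo G F x y ≤ fixOne G F x :=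
  Set.ncard_le_ncard (fun _ hq => ⟨hq.1, hq.2.1⟩) (fiber_finite hconn hfin x x)

/-- Lagrange: the placements fixing `x` are partitioned, by the image of `y`, into classes of
equal size. -/
lemma fixTwo_dvd_fixOne (x y : F) : fixTwo G F x y ∣ fixOne G F x := by
  have hfx := fiber_finite (F := F) hconn hfin x x
  refine ⟨_, (ncard_eq_mul_of_fibers (S := {q | q ∈ placements G F ∧ q x = x})
    (T := (fun q : F → V => q y) '' {q | q ∈ placements G F ∧ q x = x}) (fun q => q y) _
    (hfx.image _) (fun a ha => ⟨a, ha, rfl⟩)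
    (fun t _ => hfx.subset fun q hq => hq.1) ?_).2⟩
  rintro _ ⟨q₀, ⟨hq₀, hx⟩, rfl⟩
  rw [← fiberTwo_card hq₀ (x := x) (y := y)]
  congr 1
  ext q
  simp only [Set.mem_ofPred_eq, hx]
  tauto

variable (htrans : ∀ u v : V, ∃ φ : G ≃g G, φ u = v)
include htrans

/-- Evaluation at `x` carries the counting measure on placements to `fixOne G F x` times the
counting measure on `V`. -/
lemma ncard_mem (x : F) {A : Set V} (hA : A.Finite) :
    {q | q ∈ placements G F ∧ q x ∈ A}.Finite ∧
      {q | q ∈ placements G F ∧ q x ∈ A}.ncard = fixOne G F x * A.ncard := by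
  have hs : ∀ t ∈ A, {q | q ∈ {q | q ∈ placements G F ∧ q x ∈ A} ∧ q x = t} =
      {q | q ∈ placements G F ∧ q x = t} := by
    intro t ht
    ext q
    simp only [Set.mem_ofPred_eq]
    constructor
    · tauto
    · rintro ⟨h, rfl⟩
      exact ⟨⟨h, ht⟩, rfl⟩
  refine ncard_eq_mul_of_fibers (fun q => q x) _ hA (fun a ha => ha.2) ?_ ?_
  · intro t ht
    rw [hs t ht]
    exact fiber_finite hconn hfin x t
  · intro t ht
    rw [hs t ht]
    exact fiber_card htrans x t

variable {E : Set V} (hE : E.Finite)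
include hE

/-- For adjacent `x`, `y`, a placement sending `x` into `E` and `y` out of `E` sends the edge
`xy` to one of the outgoing edges of `E`. -/
lemma exit_le {x y : F} (hxy : G.Adj x y) :
    {q | q ∈ placements G F ∧ q x ∈ E ∧ q y ∉ E}.ncard ≤
      fixTwo G F x y * (outEdges G E).ncard := by
  refine ncard_le_mul_of_fibers (fun q => (q x, q y)) _ (outEdges_finite hfin hE) ?_
    ((ncard_mem hconn hfin htrans x hE).1.subset fun q hq => ⟨hq.1, hq.2.1⟩) ?_
  · rintro q ⟨⟨φ, rfl⟩, h1, h2⟩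
    exact ⟨φ.map_adj_iff.2 hxy, h1, h2⟩
  · rintro ⟨u, v⟩ -
    rcases Set.eq_empty_or_nonempty {q | q ∈ {q | q ∈ placements G F ∧ q x ∈ E ∧ q y ∉ E} ∧
      (q x, q y) = (u, v)} with h | ⟨q₀, ⟨hq₀, _⟩, h⟩
    · rw [h]; simp
    · rw [← fiberTwo_card hq₀]
      simp only [Prod.mk.injEq] at h
      refine Set.ncard_le_ncard ?_
        ((fiber_finite hconn hfin x (q₀ x)).subset fun q hq => ⟨hq.1, hq.2.1⟩)
      rintro q ⟨⟨hq, _⟩, h'⟩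
      simp only [Prod.mk.injEq] at h'
      exact ⟨hq, h'.1.trans h.1.symm, h'.2.trans h.2.symm⟩

/-- If `E` has fewer outgoing edges than vertices then `fixOne` cannot decrease along an edge,
hence, by symmetry, is constant along it. Otherwise it drops by at least `fixTwo G F x y`, by divisibility, and this
surplus pushes at least `|E|` edges out of `E`. -/
lemma fixOne_le_of_adj (hlt : (outEdges G E).ncard < E.ncard) {x y : F} (hxy : G.Adj x y) :
    fixOne G F x ≤ fixOne G F y := by
  by_contra! hc
  have hM := fixTwo_pos (F := F) hconn hfin x y
  obtain ⟨a, ha⟩ := fixTwo_dvd_fixOne (F := F) hconn hfin x y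
  obtain ⟨b, hb⟩ := fixTwo_dvd_fixOne (F := F) hconn hfin y x
  rw [fixTwo_comm y x] at hb
  have h1 := exit_le hconn hfin htrans hE hxy
  obtain ⟨-, h2⟩ := ncard_mem hconn hfin htrans x hE
  obtain ⟨hf, h3⟩ := ncard_mem hconn hfin htrans y hE
  have h4 : {q | q ∈ placements G F ∧ q x ∈ E}.ncard ≤
      {q | q ∈ placements G F ∧ q y ∈ E}.ncard +
        {q | q ∈ placements G F ∧ q x ∈ E ∧ q y ∉ E}.ncard := by
    refine le_trans (Set.ncard_le_ncard ?_ (hf.union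
      ((ncard_mem hconn hfin htrans x hE).1.subset fun q hq => ⟨hq.1, hq.2.1⟩)))
      (Set.ncard_union_le _ _)
    intro q hq
    by_cases h : q y ∈ E
    · exact Or.inl ⟨hq.1, h⟩
    · exact Or.inr ⟨hq.1, hq.2, h⟩
  rw [h2, h3, ha, hb] at h4
  rw [ha, hb] at hc
  have hab : b + 1 ≤ a := lt_of_mul_lt_mul_left hc (Nat.zero_le _)
  have h5 : fixTwo G F x y * ((b + 1) * E.ncard) ≤
      fixTwo G F x y * (b * E.ncard + (outEdges G E).ncard) := by
    calc _ ≤ fixTwo G F x y * (a * E.ncard) := by gcongr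
      _ ≤ _ := by linarith
  have h6 := le_of_mul_le_mul_left h5 hM
  linarith

/-- Transporting `E` along geodesics issued from `o`: a placement that has `o` in `E` and `x`
outside `E` leaves `E` at one of the `d(o, x)` steps. -/
lemma transport (hlt : (outEdges G E).ncard < E.ncard) (o : F) (R : ℕ)
    (hF : ∀ x, x ∈ F ↔ G.dist (o : V) x ≤ R) (k : ℕ) : ∀ x : F, G.dist (o : V) (x : V) = k →
      fixOne G F x = fixOne G F o ∧
      {q | q ∈ placements G F ∧ q o ∈ E ∧ q x ∉ E}.ncard ≤
        k * (fixOne G F o * (outEdges G E).ncard) := by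
  induction k with
  | zero =>
    intro x hx
    have : x = o := Subtype.ext ((hconn.dist_eq_zero_iff).1 hx).symm
    subst this
    refine ⟨rfl, ?_⟩
    simp
  | succ k ih =>
    intro x hx
    obtain ⟨y, hy, hyx⟩ := exists_dist_split hconn (o : V) (x : V) k (by omega)
    have hxR := (hF x).1 x.2
    have hyF : y ∈ F := (hF y).2 (by omega)
    have hadj : G.Adj y x := SimpleGraph.dist_eq_one_iff_adj.1 (by omega)
    obtain ⟨ih1, ih2⟩ := ih ⟨y, hyF⟩ hy
    have hadj' : G.Adj ((⟨y, hyF⟩ : F) : V) (x : V) := hadj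
    refine ⟨?_, ?_⟩
    · rw [← ih1]
      exact le_antisymm (fixOne_le_of_adj hconn hfin htrans hE hlt hadj'.symm)
        (fixOne_le_of_adj hconn hfin htrans hE hlt hadj')
    · have h1 := exit_le hconn hfin htrans hE hadj'
      have h2 : fixTwo G F ⟨y, hyF⟩ x ≤ fixOne G F o :=
        ih1 ▸ fixTwo_le_fixOne hconn hfin ⟨y, hyF⟩ x
      have h3 : {q | q ∈ placements G F ∧ q o ∈ E ∧ q x ∉ E}.ncard ≤
          {q | q ∈ placements G F ∧ q o ∈ E ∧ q ⟨y, hyF⟩ ∉ E}.ncard +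
          {q | q ∈ placements G F ∧ q ⟨y, hyF⟩ ∈ E ∧ q x ∉ E}.ncard := by
        refine le_trans (Set.ncard_le_ncard ?_ (Set.Finite.union
          ((ncard_mem hconn hfin htrans o hE).1.subset fun q hq => ⟨hq.1, hq.2.1⟩)
          ((ncard_mem hconn hfin htrans ⟨y, hyF⟩ hE).1.subset fun q hq => ⟨hq.1, hq.2.1⟩)))
          (Set.ncard_union_le _ _)
        intro q hq
        by_cases h : q ⟨y, hyF⟩ ∈ E
        · exact Or.inr ⟨hq.1, h, hq.2.2⟩
        · exact Or.inl ⟨hq.1, hq.2.1, h⟩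
      have h4 := Nat.mul_le_mul_right (outEdges G E).ncard h2
      linarith

/-- Averaging the transport estimate over all targets in the ball `F` around `o`. -/
lemma ball_average (hlt : (outEdges G E).ncard < E.ncard) (o : V) (R : ℕ)
    (hF : ∀ x, x ∈ F ↔ G.dist o x ≤ R) :
    E.ncard * (F.card - E.ncard) ≤ (∑ x ∈ F, G.dist o x) * (outEdges G E).ncard := by
  classical
  have hoF : o ∈ F := (hF o).2 (by simp)
  set o' : F := ⟨o, hoF⟩
  obtain ⟨hfinP, hcardP⟩ := ncard_mem (F := F) hconn hfin htrans o' hE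
  set P : Finset (F → V) := hfinP.toFinset with hP
  have hmemP : ∀ q, q ∈ P ↔ q ∈ placements G F ∧ q o' ∈ E := fun q => by simp [hP]
  have hN : 0 < fixOne G F o' :=
    (fixTwo_pos hconn hfin o' o').trans_le (fixTwo_le_fixOne hconn hfin o' o')
  have hPc : P.card = fixOne G F o' * E.ncard := by
    rw [← hcardP, Set.ncard_eq_toFinset_card _ hfinP]
  -- Count the pairs `(q, x)` with `q o ∈ E` and `q x ∉ E` in both orders.
  have hdouble : ∑ q ∈ P, (Finset.univ.filter fun x : F => q x ∉ E).card =
      ∑ x : F, (P.filter fun q => q x ∉ E).card :=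
    Finset.sum_card_bipartiteAbove_eq_sum_card_bipartiteBelow (fun (q : F → V) (x : F) => q x ∉ E)
  have hlow : P.card * (F.card - E.ncard) ≤
      ∑ q ∈ P, (Finset.univ.filter fun x : F => q x ∉ E).card := by
    rw [← smul_eq_mul]
    refine Finset.card_nsmul_le_sum _ _ _ fun q hq => ?_
    obtain ⟨⟨φ, rfl⟩, -⟩ := (hmemP q).1 hq
    have h1 := Finset.card_filter_add_card_filter_not (s := (Finset.univ : Finset F))
      (fun x : F => φ x ∈ E)
    have h2 : (Finset.univ.filter fun x : F => φ x ∈ E).card ≤ E.ncard := by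
      rw [Set.ncard_eq_toFinset_card E hE]
      refine Finset.card_le_card_of_injOn (fun x : F => φ x) (by intro x hx; simpa using hx) ?_
      intro x _ y _ h
      exact Subtype.ext (φ.injective h)
    rw [Finset.card_univ, Fintype.card_coe] at h1
    change F.card - E.ncard ≤ (Finset.univ.filter fun x : F => φ x ∉ E).card
    omega
  have hup : ∑ x : F, (P.filter fun q => q x ∉ E).card ≤
      ∑ x : F, G.dist o x * (fixOne G F o' * (outEdges G E).ncard) := by
    refine Finset.sum_le_sum fun x _ => ?_
    have h := (transport hconn hfin htrans hE hlt o' R hF _ x rfl).2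
    refine le_trans (le_of_eq ?_) h
    rw [← Set.ncard_coe_finset]
    congr 1
    ext q
    simp [hmemP, and_assoc]
  rw [← Finset.sum_mul, Finset.sum_coe_sort F (fun x => G.dist o x)] at hup
  have := (hlow.trans hdouble.le).trans hup
  rw [hPc] at this
  refine le_of_mul_le_mul_left (a := fixOne G F o') ?_ hN
  linarith

end Placements

/-! ### The isoperimetric inequality -/

/-- The inequality in terms of outgoing edges and closed balls of integer radius. -/
lemma ncard_le_outEdges {V : Type} {G : SimpleGraph V} (hconn : G.Connected)
    (hfin : ∀ v : V, (G.neighborSet v).Finite)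
    (htrans : ∀ u v : V, ∃ φ : G ≃g G, φ u = v) (hinf : Infinite V)
    {E : Set V} (hE : E.Finite) (n : ℕ)
    (hball : ∀ c : V, E.ncard ≤ {x | G.dist c x ≤ n}.ncard) :
    E.ncard ≤ (3 * n + 1) * (outEdges G E).ncard := by
  classical
  by_cases hlt : (outEdges G E).ncard < E.ncard
  swap
  · nlinarith
  obtain ⟨o, c₁, c₂, hdisj, hsub⟩ := exists_two_balls hconn hfin hinf n
  have hf := finite_closedBall hconn hfin (G := G)
  set F : Finset V := (hf o (2 * n + 1)).toFinset with hFdef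
  have hF : ∀ x, x ∈ F ↔ G.dist o x ≤ 2 * n + 1 := fun x => by simp [hFdef]
  have hmain := ball_average hconn hfin htrans hE hlt o _ hF
  have hN : 2 * E.ncard ≤ F.card := by
    have h := Set.ncard_le_ncard hsub (hf o _)
    rw [Set.ncard_union_eq hdisj (hf _ _) (hf _ _),
      Set.ncard_eq_toFinset_card _ (hf o (2 * n + 1))] at h
    have h1 := hball c₁
    have h2 := hball c₂
    rw [← hFdef] at h
    omega
  have hsum : ∑ x ∈ F, G.dist o x + (n + 1) * (F.filter fun x => G.dist o x ≤ n).card ≤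
      (2 * n + 1) * F.card := by
    rw [Finset.card_filter, Finset.mul_sum, ← Finset.sum_add_distrib, mul_comm, ← smul_eq_mul]
    refine Finset.sum_le_card_nsmul _ _ _ fun x hx => ?_
    have := (hF x).1 hx
    split_ifs <;> omega
  have hb : E.ncard ≤ (F.filter fun x => G.dist o x ≤ n).card := by
    refine (hball o).trans (le_of_eq ?_)
    rw [← Set.ncard_coe_finset]
    congr 1
    ext x
    simp only [Set.mem_ofPred_eq, Finset.coe_filter, hF]
    omega
  obtain ⟨t, ht⟩ := Nat.exists_eq_add_of_le hN
  have hsub' : F.card - E.ncard = E.ncard + t := by omega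
  have hsum' : ∑ x ∈ F, G.dist o x ≤ (3 * n + 1) * (E.ncard + t) := by
    have := Nat.mul_le_mul_left (n + 1) hb
    rw [ht] at hsum
    nlinarith
  rw [hsub'] at hmain
  have h := hmain.trans (Nat.mul_le_mul_right _ hsum')
  have hpos : 0 < E.ncard + t := by omega
  refine le_of_mul_le_mul_left (a := E.ncard + t) ?_ hpos
  linarith

/-- Weak isoperimetric inequality (discrete, infinite case): on a connected, locally
finite, countable, vertex-transitive graph with infinite vertex set, if `E ⊆ V` has
cardinality at most that of a ball of radius `r` (for some real `r ≥ 1`), then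
`|E| ≤ 2 r ‖∂E‖`. -/
theorem discrete_weak_isoperimetric_infinite
    (V : Type) (G : SimpleGraph V) (hcount : Countable V) (hconn : G.Connected)
    (hfin : ∀ v : V, (G.neighborSet v).Finite)
    (htrans : ∀ u v : V, ∃ φ : G ≃g G, φ u = v)
    (hinf : Infinite V)
    (E : Set V) (r : ℝ) (hr : 1 ≤ r)
    (hE : ∀ m₀ : V, E.encard ≤ {n | (G.dist m₀ n : ℝ) < r}.encard) :
    (E.ncard : ℝ) ≤ 2 * r * edgePerim G E := by
  have hr0 : 0 < ⌈r⌉₊ := Nat.ceil_pos.2 (by linarith)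
  obtain ⟨n, hn⟩ : ∃ n, ⌈r⌉₊ = n + 1 := ⟨⌈r⌉₊ - 1, by omega⟩
  have hnr : (n : ℝ) < r := Nat.lt_ceil.1 (by omega)
  have hset : ∀ c : V, {x | (G.dist c x : ℝ) < r} = {x | G.dist c x ≤ n} := fun c => by
    ext x
    simp only [Set.mem_ofPred_eq]
    rw [← Nat.lt_ceil, hn, Nat.lt_succ_iff]
  simp only [hset] at hE
  have hf := finite_closedBall hconn hfin (G := G)
  obtain ⟨o⟩ := hconn.nonempty
  have hEfin : E.Finite := Set.finite_of_encard_le_coe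
    ((hE o).trans (hf o n).cast_ncard_eq.ge)
  have hball : ∀ c : V, E.ncard ≤ {x | G.dist c x ≤ n}.ncard := fun c =>
    ENat.toNat_le_toNat (hE c) (Set.encard_ne_top_iff.2 (hf c n))
  have h := ncard_le_outEdges hconn hfin htrans hinf hEfin n hball
  rw [edgePerim_eq hfin hEfin]
  have h' : (E.ncard : ℝ) ≤ (3 * n + 1) * ((outEdges G E).ncard : ℝ) := by exact_mod_cast h
  have h0 : (0 : ℝ) ≤ ((outEdges G E).ncard : ℝ) := Nat.cast_nonneg _
  nlinarith
end
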